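/- arXiv:1902.02456 — 7 statements merged into one kernel-verified Lean document; each statement's English description precedes it below -/
import Mathlib

section
/- Let φ : ℝ → ℝ be continuous with lim_{t→−∞} φ(t) = 0 and lim_{t→+∞} φ(t) = 1. Let μ be a finite signed Borel measure on J^m = [−1,1]^m ⊂ ℝ^m, let w ∈ ℝ^m \ {0}, and let s, t ∈ ℝ. Then lim_{λ→+∞} ∫_{J^m} φ(λ(w·x + s) + t) dμ(x) = μ({x ∈ J^m : w·x + s > 0}) + φ(t) · μ({x ∈ J^m : w·x + s = 0}). -/
/-!
As `r → +∞`, `φ (r * y + t)` converges to the limit of `φ` at `-∞`, to `φ t` or to the limit of `φ`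
at `+∞` according to the sign of `y`. For bounded `φ`, in particular for continuous `φ` with limits
at `±∞`, dominated convergence over a finite measure then gives convergence of the integrals.
-/

open MeasureTheory Filter Topology

section SignStep

variable {𝕜 E X : Type*}

/-- The step function `𝕜 → E` with values `a`, `c` and `b` at negative, zero and positive arguments.
It is the pointwise limit of a dilated sigmoidal function. -/
def signStep [Zero 𝕜] [LinearOrder 𝕜] (a c b : E) (y : 𝕜) : E :=
  if y < 0 then a else if y = 0 then c else b

theorem signStep_comp_eq_indicator_add [Zero 𝕜] [LinearOrder 𝕜] [AddZeroClass E] (a c b : E)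
    (g : X → 𝕜) :
    (fun x => signStep a c b (g x)) = {x | g x < 0}.indicator (fun _ => a) +
      {x | g x = 0}.indicator (fun _ => c) + {x | 0 < g x}.indicator (fun _ => b) := by
  ext x
  rcases lt_trichotomy (g x) 0 with hx | hx | hx
  · simp [signStep, Set.indicator, hx, hx.ne, hx.not_gt]
  · simp [signStep, Set.indicator, hx]
  · simp [signStep, Set.indicator, hx, hx.ne', hx.not_gt]

theorem tendsto_comp_mul_add_signStep [Field 𝕜] [LinearOrder 𝕜] [IsStrictOrderedRing 𝕜]
    [TopologicalSpace E] {φ : 𝕜 → E} {a b : E} (ha : Tendsto φ atBot (𝓝 a))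
    (hb : Tendsto φ atTop (𝓝 b)) (y t : 𝕜) :
    Tendsto (fun r => φ (r * y + t)) atTop (𝓝 (signStep a (φ t) b y)) := by
  rcases lt_trichotomy y 0 with hy | rfl | hy
  · rw [signStep, if_pos hy]
    exact ha.comp (tendsto_atBot_add_const_right _ t (tendsto_id.atTop_mul_const_of_neg hy))
  · simpa [signStep] using tendsto_const_nhds
  · rw [signStep, if_neg hy.not_gt, if_neg hy.ne']
    exact hb.comp (tendsto_atTop_add_const_right _ t (tendsto_id.atTop_mul_const hy))

variable [NormedAddCommGroup E] [NormedSpace ℝ E] [CompleteSpace E] [MeasurableSpace X]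
  {μ : Measure X} [IsFiniteMeasure μ] {g : X → ℝ}

theorem integral_signStep_comp (hg : Measurable g) (a c b : E) :
    ∫ x, signStep a c b (g x) ∂μ =
      μ.real {x | g x < 0} • a + μ.real {x | g x = 0} • c + μ.real {x | 0 < g x} • b := by
  have hneg : MeasurableSet {x | g x < 0} := measurableSet_lt hg measurable_const
  have hzero : MeasurableSet {x | g x = 0} := measurableSet_eq_fun hg measurable_const
  have hpos : MeasurableSet {x | 0 < g x} := measurableSet_lt measurable_const hg
  have integrable_indicator {s : Set X} (hs : MeasurableSet s) (e : E) :
      Integrable (s.indicator fun _ => e) μ := (integrable_const e).indicator hs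
  rw [signStep_comp_eq_indicator_add,
    integral_add' ((integrable_indicator hneg a).add (integrable_indicator hzero c))
      (integrable_indicator hpos b),
    integral_add' (integrable_indicator hneg a) (integrable_indicator hzero c),
    integral_indicator_const a hneg, integral_indicator_const c hzero,
    integral_indicator_const b hpos]

theorem tendsto_integral_comp_mul_add {φ : ℝ → E} {a b : E} (hφ : StronglyMeasurable φ)
    (hbdd : Bornology.IsBounded (Set.range φ)) (ha : Tendsto φ atBot (𝓝 a))
    (hb : Tendsto φ atTop (𝓝 b)) (hg : Measurable g) (t : ℝ) :
    Tendsto (fun r => ∫ x, φ (r * g x + t) ∂μ) atTop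
      (𝓝 (μ.real {x | g x < 0} • a + μ.real {x | g x = 0} • φ t + μ.real {x | 0 < g x} • b)) := by
  obtain ⟨C, hC⟩ := hbdd.exists_norm_le
  rw [← integral_signStep_comp hg]
  exact tendsto_integral_filter_of_dominated_convergence (fun _ => C)
    (.of_forall fun r =>
      (hφ.comp_measurable ((hg.const_mul r).add_const t)).aestronglyMeasurable)
    (.of_forall fun _ => .of_forall fun _ => hC _ (Set.mem_range_self _))
    (integrable_const C)
    (.of_forall fun x => tendsto_comp_mul_add_signStep ha hb (g x) t)

end SignStep

theorem stmt4_general {X : Type*} [MeasurableSpace X] (μ₁ μ₂ : Measure X) [IsFiniteMeasure μ₁]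
    [IsFiniteMeasure μ₂] {φ : ℝ → ℝ} (hφ : Measurable φ)
    (hbdd : Bornology.IsBounded (Set.range φ)) (h0 : Tendsto φ atBot (𝓝 0))
    (h1 : Tendsto φ atTop (𝓝 1)) {g : X → ℝ} (hg : Measurable g) (t : ℝ) :
    Tendsto (fun r : ℝ => (∫ x, φ (r * g x + t) ∂μ₁) - ∫ x, φ (r * g x + t) ∂μ₂) atTop
      (𝓝 ((μ₁.real {x | 0 < g x} - μ₂.real {x | 0 < g x}) +
        φ t * (μ₁.real {x | g x = 0} - μ₂.real {x | g x = 0}))) := by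
  convert (tendsto_integral_comp_mul_add (μ := μ₁) hφ.stronglyMeasurable hbdd h0 h1 hg t).sub
    (tendsto_integral_comp_mul_add (μ := μ₂) hφ.stronglyMeasurable hbdd h0 h1 hg t) using 2
  simp only [smul_eq_mul]
  ring

/-- For a continuous sigmoidal `φ` (limits `0` at `-∞` and `1` at `+∞`) and a
finite signed Borel measure `μ = μ₁ - μ₂` supported on `J^m = [-1,1]^m`,
`lim_{λ→+∞} ∫ φ(λ(w·x+s)+t) dμ = μ({w·x+s > 0}) + φ(t) μ({w·x+s = 0})`. -/
theorem stmt4 {m : ℕ} (hm : 1 ≤ m) (φ : ℝ → ℝ) (hφ : Continuous φ)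
    (h0 : Tendsto φ atBot (𝓝 0)) (h1 : Tendsto φ atTop (𝓝 1))
    (μ₁ μ₂ : Measure (Fin m → ℝ)) [IsFiniteMeasure μ₁] [IsFiniteMeasure μ₂]
    (hs₁ : μ₁ (Set.Icc (-1 : Fin m → ℝ) 1)ᶜ = 0) (hs₂ : μ₂ (Set.Icc (-1 : Fin m → ℝ) 1)ᶜ = 0)
    (w : Fin m → ℝ) (hw : w ≠ 0) (s t : ℝ) :
    Tendsto (fun lam : ℝ =>
        (∫ x, φ (lam * ((∑ i, w i * x i) + s) + t) ∂μ₁) -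
          ∫ x, φ (lam * ((∑ i, w i * x i) + s) + t) ∂μ₂)
      atTop
      (𝓝 (((μ₁ {x | 0 < (∑ i, w i * x i) + s}).toReal -
              (μ₂ {x | 0 < (∑ i, w i * x i) + s}).toReal) +
            φ t * ((μ₁ {x | (∑ i, w i * x i) + s = 0}).toReal -
              (μ₂ {x | (∑ i, w i * x i) + s = 0}).toReal))) :=
  stmt4_general μ₁ μ₂ hφ.measurable
    (hφ.isBounded_range_iff_isBigO_atTop_atBot.2 ⟨h1.isBigO_one ℝ, h0.isBigO_one ℝ⟩)
    h0 h1 (by fun_prop) t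
end

section
/- (Cybenko's Universal Approximation Theorem.) Let φ : ℝ → ℝ be continuous with lim_{t→−∞} φ(t) = 0 and lim_{t→+∞} φ(t) = 1. Then the linear span of the family of functions {x ↦ φ(w·x + λ) : w ∈ ℝ^m \ {0}, λ ∈ ℝ} is dense in the space C(J^m, ℝ) of continuous real-valued functions on J^m = [−1,1]^m with respect to the uniform (sup) norm. -/
open MeasureTheory Filter Topology

/-!
A continuous function `f` on an interval is close to a fine staircase. Replace each of its steps by
a dilated translate of `φ`, steep enough to agree with the step up to `1 / N` outside the two mesh
cells around the jump, `N` being the number of steps. At a given point at most two steps are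
replaced badly, and these cost only a constant times the oscillation of `f` over one mesh cell. So
the closed span contains every continuous function of `w ⬝ x`, in particular `exp (w ⬝ x)`. These
exponentials are closed under products and separate points, so by Stone–Weierstrass their span is
dense.
-/

section Staircase

/-- The Heaviside step function, right-continuous at the jump so that sums of its integer translates
are floor functions. -/
noncomputable def heaviside (t : ℝ) : ℝ := if 0 ≤ t then 1 else 0

lemma abs_heaviside_le_one (t : ℝ) : |heaviside t| ≤ 1 := by
  unfold heaviside
  split_ifs <;> simp

lemma heaviside_mul_of_pos {c : ℝ} (hc : 0 < c) (t : ℝ) : heaviside (c * t) = heaviside t := by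
  simp only [heaviside, mul_nonneg_iff_of_pos_left hc]

lemma sum_sub_mul_heaviside (g : ℕ → ℝ) {t : ℝ} {N : ℕ} (ht : ⌊t⌋₊ ≤ N) :
    ∑ j ∈ Finset.range N, (g (j + 1) - g j) * heaviside (t - (j + 1)) = g ⌊t⌋₊ - g 0 := by
  have step_eq (j : ℕ) : heaviside (t - (j + 1)) = if j < ⌊t⌋₊ then 1 else 0 := by
    have h : j + 1 ≤ ⌊t⌋₊ ↔ (j + 1 : ℝ) ≤ t := mod_cast Nat.le_floor_iff' j.succ_ne_zero
    simp only [heaviside, sub_nonneg, ← h, Nat.succ_le_iff]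
  have filter_eq : {j ∈ Finset.range N | j < ⌊t⌋₊} = Finset.range ⌊t⌋₊ := by
    ext j
    simp only [Finset.mem_filter, Finset.mem_range]
    omega
  simp only [step_eq, mul_ite, mul_one, mul_zero]
  rw [← Finset.sum_filter, filter_eq, Finset.sum_range_sub]

lemma card_filter_abs_sub_natCast_lt_one_le_two (s : Finset ℕ) (t : ℝ) :
    ({j ∈ s | |t - (j : ℝ)| < 1} : Finset ℕ).card ≤ 2 := by
  refine (Finset.card_le_card fun j hj => ?_).trans (Finset.card_le_two (a := ⌊t⌋₊) (b := ⌊t⌋₊ + 1))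
  have hjt := abs_lt.1 (Finset.mem_filter.1 hj).2
  have lower : ⌊t⌋₊ < j + 1 := (Nat.floor_lt' j.succ_ne_zero).2 (by push_cast; linarith)
  have upper : j < ⌊t⌋₊ + 2 := by
    have := Nat.lt_floor_add_one t
    exact_mod_cast (by push_cast; linarith : (j : ℝ) < (⌊t⌋₊ + 2 : ℕ))
  simp only [Finset.mem_insert, Finset.mem_singleton]
  omega

lemma sum_translates_le {e : ℝ → ℝ} {M δ : ℝ} (hM : 0 ≤ M) (hδ : 0 ≤ δ) (he : ∀ u, e u ≤ M)
    (he_far : ∀ u, 1 ≤ |u| → e u ≤ δ) (s : Finset ℕ) (t : ℝ) :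
    ∑ j ∈ s, e (t - j) ≤ s.card * δ + 2 * M := by
  have term_le (j : ℕ) : e (t - j) ≤ δ + if |t - (j : ℝ)| < 1 then M else 0 := by
    split_ifs with h
    · linarith [he (t - j)]
    · linarith [he_far _ (not_lt.1 h)]
  calc ∑ j ∈ s, e (t - j)
      ≤ ∑ j ∈ s, (δ + if |t - (j : ℝ)| < 1 then M else 0) := Finset.sum_le_sum fun j _ => term_le j
    _ = s.card * δ + ({j ∈ s | |t - (j : ℝ)| < 1} : Finset ℕ).card * M := by
      simp only [Finset.sum_add_distrib, ← Finset.sum_filter, Finset.sum_const, nsmul_eq_mul]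
    _ ≤ s.card * δ + 2 * M := by
      gcongr
      exact_mod_cast card_filter_abs_sub_natCast_lt_one_le_two s t

lemma abs_sub_sum_translates_le {g ψ : ℝ → ℝ} {N : ℕ} {η : ℝ}
    (hg : ∀ x ∈ Set.Icc (0 : ℝ) N, ∀ y ∈ Set.Icc (0 : ℝ) N, |x - y| ≤ 1 → |g x - g y| ≤ η)
    {t : ℝ} (ht : t ∈ Set.Icc (0 : ℝ) N) :
    |g t - (g 0 + ∑ j ∈ Finset.range N, (g (j + 1) - g j) * ψ (t - (j + 1)))| ≤
      η * (1 + ∑ j ∈ Finset.range N, |heaviside (t - (j + 1)) - ψ (t - (j + 1))|) := by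
  have floor_le : ⌊t⌋₊ ≤ N := Nat.floor_le_of_le ht.2
  have staircase := sum_sub_mul_heaviside (fun j => g j) floor_le
  push_cast at staircase
  have cell : |g t - g ⌊t⌋₊| ≤ η := by
    refine hg t ht _ ⟨by positivity, mod_cast floor_le⟩ (abs_le.2 ⟨?_, ?_⟩)
    · linarith [Nat.floor_le ht.1]
    · linarith [Nat.lt_floor_add_one t]
  have jump : ∀ j ∈ Finset.range N, |g (j + 1) - g j| ≤ η := by
    intro j hj
    have hjN : (j + 1 : ℝ) ≤ N := mod_cast Finset.mem_range.1 hj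
    exact hg _ ⟨by positivity, hjN⟩ _ ⟨by positivity, by linarith⟩ (by simp)
  calc |g t - (g 0 + ∑ j ∈ Finset.range N, (g (j + 1) - g j) * ψ (t - (j + 1)))|
      = |(g t - g ⌊t⌋₊) + ∑ j ∈ Finset.range N,
          (g (j + 1) - g j) * (heaviside (t - (j + 1)) - ψ (t - (j + 1)))| := by
        simp only [mul_sub (_ - _), Finset.sum_sub_distrib, staircase]
        congr 1
        ring
    _ ≤ |g t - g ⌊t⌋₊| + ∑ j ∈ Finset.range N,
          |g (j + 1) - g j| * |heaviside (t - (j + 1)) - ψ (t - (j + 1))| := by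
        simp only [← abs_mul]
        exact (abs_add_le _ _).trans (by gcongr; exact Finset.abs_sum_le_sum_abs _ _)
    _ ≤ η + ∑ j ∈ Finset.range N, η * |heaviside (t - (j + 1)) - ψ (t - (j + 1))| := by
        gcongr with j hj
        exact jump j hj
    _ = η * (1 + ∑ j ∈ Finset.range N, |heaviside (t - (j + 1)) - ψ (t - (j + 1))|) := by
        rw [← Finset.mul_sum]
        ring

end Staircase

section Sigmoidal

lemma exists_forall_norm_le_of_tendsto_atBot_atTop {E : Type*} [SeminormedAddCommGroup E]
    {φ : ℝ → E} (hφ : Continuous φ) {a b : E} (ha : Tendsto φ atBot (𝓝 a))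
    (hb : Tendsto φ atTop (𝓝 b)) : ∃ M, ∀ t, ‖φ t‖ ≤ M := by
  have bounded := hφ.isBounded_range_iff_isBigO_atTop_atBot.2 ⟨hb.isBigO_one ℝ, ha.isBigO_one ℝ⟩
  simpa only [Set.forall_mem_range] using bounded.exists_norm_le

lemma exists_forall_abs_heaviside_sub_le {σ : ℝ → ℝ} (h0 : Tendsto σ atBot (𝓝 0))
    (h1 : Tendsto σ atTop (𝓝 1)) {δ : ℝ} (hδ : 0 < δ) :
    ∃ T > 0, ∀ t, T ≤ |t| → |heaviside t - σ t| ≤ δ := by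
  obtain ⟨a, ha⟩ := eventually_atBot.1 (Metric.tendsto_nhds.1 h0 δ hδ)
  obtain ⟨b, hb⟩ := eventually_atTop.1 (Metric.tendsto_nhds.1 h1 δ hδ)
  refine ⟨max 1 (max b (-a)), by positivity, fun t ht => ?_⟩
  simp only [max_le_iff] at ht
  obtain ⟨ht1, htb, hta⟩ := ht
  rcases le_total 0 t with hpos | hneg
  · rw [abs_of_nonneg hpos] at htb
    rw [heaviside, if_pos hpos, abs_sub_comm]
    exact (hb t htb).le
  · rw [abs_of_nonpos hneg] at ht1 hta
    rw [heaviside, if_neg (by linarith), abs_sub_comm]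
    exact (ha t (by linarith)).le

lemma exists_sum_abs_heaviside_sub_dilates_le {σ : ℝ → ℝ} (h0 : Tendsto σ atBot (𝓝 0))
    (h1 : Tendsto σ atTop (𝓝 1)) {M : ℝ} (hM : ∀ t, |heaviside t - σ t| ≤ M) (N : ℕ) :
    ∃ T > 0, ∀ x : ℝ, ∑ j ∈ Finset.range N,
      |heaviside (x - (j + 1)) - σ (T * (x - (j + 1)))| ≤ 1 + 2 * M := by
  have hδ : (0 : ℝ) < 1 / (N + 1) := by positivity
  have hNδ : N * (1 / (N + 1) : ℝ) ≤ 1 := by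
    rw [mul_one_div, div_le_one₀ (by positivity)]
    exact (lt_add_one _).le
  obtain ⟨T, hT, hfar⟩ := exists_forall_abs_heaviside_sub_le h0 h1 hδ
  have dilate_far (u : ℝ) (hu : 1 ≤ |u|) : |heaviside u - σ (T * u)| ≤ 1 / (N + 1) := by
    rw [← heaviside_mul_of_pos hT u]
    exact hfar _ (by rw [abs_mul, abs_of_pos hT]; exact le_mul_of_one_le_right hT.le hu)
  have dilate_le (u : ℝ) : |heaviside u - σ (T * u)| ≤ M := by
    rw [← heaviside_mul_of_pos hT u]
    exact hM _
  refine ⟨T, hT, fun x => ?_⟩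
  have sum_le := sum_translates_le ((abs_nonneg _).trans (hM 0)) hδ.le dilate_le dilate_far
    (Finset.range N) (x - 1)
  rw [Finset.card_range] at sum_le
  simp only [sub_sub, add_comm (1 : ℝ) (Nat.cast _)] at sum_le
  exact sum_le.trans (by gcongr)

lemma exists_subdivision_oscillation_le {f : ℝ → ℝ} {a b : ℝ} (hab : a < b)
    (hf : ContinuousOn f (Set.Icc a b)) {η : ℝ} (hη : 0 < η) :
    ∃ (N : ℕ) (h : ℝ), 0 < h ∧ N * h = b - a ∧
      ∀ x ∈ Set.Icc (0 : ℝ) N, ∀ y ∈ Set.Icc (0 : ℝ) N, |x - y| ≤ 1 →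
        |f (a + h * x) - f (a + h * y)| ≤ η := by
  obtain ⟨δ, hδ, hfδ⟩ := Metric.uniformContinuousOn_iff.1
    (isCompact_Icc.uniformContinuousOn_of_continuous hf) η hη
  have hlen : 0 < b - a := sub_pos.2 hab
  obtain ⟨N, hN⟩ := exists_nat_gt ((b - a) / δ)
  have hNpos : (0 : ℝ) < N := (div_pos hlen hδ).trans hN
  set h := (b - a) / N
  have hh : 0 < h := div_pos hlen hNpos
  have hNh : N * h = b - a := mul_div_cancel₀ _ hNpos.ne'
  have hhδ : h < δ := (div_lt_comm₀ hδ hNpos).1 hN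
  have mem_Icc {x : ℝ} (hx : x ∈ Set.Icc (0 : ℝ) N) : a + h * x ∈ Set.Icc a b :=
    ⟨by nlinarith [hx.1], by nlinarith [hx.2]⟩
  refine ⟨N, h, hh, hNh, fun x hx y hy hxy => ?_⟩
  refine (hfδ _ (mem_Icc hx) _ (mem_Icc hy) ?_).le
  calc dist (a + h * x) (a + h * y) = h * |x - y| := by
        rw [Real.dist_eq, add_sub_add_left_eq_sub, ← mul_sub, abs_mul, abs_of_pos hh]
    _ ≤ h := mul_le_of_le_one_right hh.le hxy
    _ < δ := hhδ

lemma exists_sum_sigmoidal_dilates_approx {σ : ℝ → ℝ} (hσ : Continuous σ)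
    (h0 : Tendsto σ atBot (𝓝 0)) (h1 : Tendsto σ atTop (𝓝 1)) {f : ℝ → ℝ} {a b : ℝ} (hab : a < b)
    (hf : ContinuousOn f (Set.Icc a b)) {ε : ℝ} (hε : 0 < ε) :
    ∃ (N : ℕ) (k : ℝ) (c l : ℕ → ℝ), k ≠ 0 ∧ ∀ t ∈ Set.Icc a b,
      |f t - (f a + ∑ j ∈ Finset.range N, c j * σ (k * t + l j))| ≤ ε := by
  obtain ⟨B, hB⟩ := exists_forall_norm_le_of_tendsto_atBot_atTop hσ h0 h1
  set M := 1 + B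
  have hM : ∀ t, |heaviside t - σ t| ≤ M := fun t =>
    (abs_sub _ _).trans (add_le_add (abs_heaviside_le_one t) (hB t))
  have hM0 : 0 ≤ M := (abs_nonneg _).trans (hM 0)
  obtain ⟨N, h, hh, hNh, hosc⟩ :=
    exists_subdivision_oscillation_le hab hf (η := ε / (2 + 2 * M)) (by positivity)
  obtain ⟨T, hT, error_sum⟩ := exists_sum_abs_heaviside_sub_dilates_le h0 h1 hM N
  refine ⟨N, T / h, fun j => f (a + h * (j + 1)) - f (a + h * j),
    fun j => -(T / h * a) - T * (j + 1), by positivity, fun t ht => ?_⟩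
  obtain ⟨x, rfl⟩ : ∃ x, t = a + h * x := ⟨(t - a) / h, by field_simp; ring⟩
  have hx : x ∈ Set.Icc (0 : ℝ) N :=
    ⟨by nlinarith [ht.1], le_of_mul_le_mul_left (by linarith [ht.2]) hh⟩
  have rescale (j : ℕ) :
      T / h * (a + h * x) + (-(T / h * a) - T * (j + 1)) = T * (x - (j + 1)) := by
    field_simp
    ring
  have staircase := abs_sub_sum_translates_le (ψ := fun u => σ (T * u)) hosc hx
  simp only [mul_zero, add_zero] at staircase
  simp only [rescale]
  calc _ ≤ _ := staircase
    _ ≤ ε / (2 + 2 * M) * (1 + (1 + 2 * M)) := by gcongr; exact error_sum x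
    _ = ε := by field_simp; ring

lemma exists_const_add_sum_dilates_approx {φ : ℝ → ℝ} (hφ : Continuous φ) {a b : ℝ}
    (ha : Tendsto φ atBot (𝓝 a)) (hb : Tendsto φ atTop (𝓝 b)) (hab : a ≠ b) {f : ℝ → ℝ}
    {p q : ℝ} (hpq : p < q) (hf : ContinuousOn f (Set.Icc p q)) {ε : ℝ} (hε : 0 < ε) :
    ∃ (N : ℕ) (k c₀ : ℝ) (c l : ℕ → ℝ), k ≠ 0 ∧ ∀ t ∈ Set.Icc p q,
      |f t - (c₀ + ∑ j ∈ Finset.range N, c j * φ (k * t + l j))| ≤ ε := by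
  have hba : b - a ≠ 0 := sub_ne_zero.2 hab.symm
  have h0 : Tendsto (fun t => (φ t - a) / (b - a)) atBot (𝓝 0) := by
    simpa using (ha.sub_const a).div_const (b - a)
  have h1 : Tendsto (fun t => (φ t - a) / (b - a)) atTop (𝓝 1) := by
    simpa [hba] using (hb.sub_const a).div_const (b - a)
  obtain ⟨N, k, c, l, hk, happrox⟩ :=
    exists_sum_sigmoidal_dilates_approx (by fun_prop) h0 h1 hpq hf hε
  refine ⟨N, k, f p - ∑ j ∈ Finset.range N, c j / (b - a) * a, fun j => c j / (b - a), l, hk,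
    fun t ht => ?_⟩
  convert happrox t ht using 3
  rw [sub_add_eq_add_sub, add_sub_assoc, ← Finset.sum_sub_distrib]
  congr! 2 with j
  ring

end Sigmoidal

section ContinuousMap

variable {X : Type*} [TopologicalSpace X]

lemma const_mem_of_dilates_mem {V : Submodule ℝ C(X, ℝ)} (hV : IsClosed (V : Set C(X, ℝ)))
    {φ : C(ℝ, ℝ)} (hφ : φ ≠ 0) {u : C(X, ℝ)}
    (hu : ∀ k : ℝ, k ≠ 0 → ∀ l : ℝ, φ.comp (k • u + .const X l) ∈ V) (c : ℝ) :
    .const X c ∈ V := by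
  obtain ⟨l, hl⟩ := DFunLike.ne_iff.1 hφ
  have dilate_continuous : Continuous fun k : ℝ => φ.comp (k • u + .const X l) :=
    (ContinuousMap.continuous_postcomp φ).comp (by fun_prop)
  have const_mem : φ.comp ((0 : ℝ) • u + .const X l) ∈ V :=
    hV.mem_of_tendsto (b := 𝓝[≠] 0) (dilate_continuous.continuousWithinAt.tendsto)
      (eventually_mem_nhdsWithin.mono fun k hk => hu k hk l)
  convert V.smul_mem (c / φ l) const_mem using 1
  ext x
  simp [div_mul_cancel₀ c hl]

/-- The family of exponentials `exp (U w)`, bundled as a homomorphism so that its range is a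
submonoid of `C(X, ℝ)`. -/
noncomputable def expFamily {W : Type*} [AddMonoid W] (U : W →+ C(X, ℝ)) :
    Multiplicative W →* C(X, ℝ) where
  toFun w := (⟨Real.exp, Real.continuous_exp⟩ : C(ℝ, ℝ)).comp (U w.toAdd)
  map_one' := by ext x; simp
  map_mul' v w := by ext x; simp [Real.exp_add]

variable [CompactSpace X]

lemma comp_mem_of_dilates_mem {V : Submodule ℝ C(X, ℝ)} (hV : IsClosed (V : Set C(X, ℝ)))
    {φ : C(ℝ, ℝ)} {a b : ℝ} (ha : Tendsto φ atBot (𝓝 a)) (hb : Tendsto φ atTop (𝓝 b))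
    (hab : a ≠ b) {u : C(X, ℝ)}
    (hu : ∀ k : ℝ, k ≠ 0 → ∀ l : ℝ, φ.comp (k • u + .const X l) ∈ V) (f : C(ℝ, ℝ)) :
    f.comp u ∈ V := by
  have hφ : φ ≠ 0 := by
    rintro rfl
    exact hab ((tendsto_nhds_unique ha tendsto_const_nhds).trans
      (tendsto_nhds_unique tendsto_const_nhds hb))
  refine hV.closure_subset (Metric.mem_closure_iff.2 fun ε hε => ?_)
  set R := ‖u‖ + 1
  have hR : 0 < R := by positivity
  obtain ⟨N, k, c₀, c, l, hk, happrox⟩ := exists_const_add_sum_dilates_approx φ.continuous ha hb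
    hab (neg_lt_self hR) f.continuous.continuousOn (half_pos hε)
  refine ⟨.const X c₀ + ∑ j ∈ Finset.range N, c j • φ.comp (k • u + .const X (l j)),
    V.add_mem (const_mem_of_dilates_mem hV hφ hu c₀)
      (V.sum_mem fun j _ => V.smul_mem _ (hu k hk _)),
    ((ContinuousMap.dist_le (half_pos hε).le).2 fun x => ?_).trans_lt (half_lt_self hε)⟩
  have hx : u x ∈ Set.Icc (-R) R := abs_le.1 <|
    (u.norm_coe_le_norm x).trans (le_add_of_nonneg_right zero_le_one)
  simpa [Real.dist_eq, ContinuousMap.sum_apply] using happrox (u x) hx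

lemma dense_span_submonoid_of_separatesPoints (P : Submonoid C(X, ℝ))
    (hP : ((fun f : C(X, ℝ) => (f : X → ℝ)) '' P).SeparatesPoints) :
    Dense (Submodule.span ℝ (P : Set C(X, ℝ)) : Set C(X, ℝ)) := by
  have hdense := ContinuousMap.subalgebra_topologicalClosure_eq_top_of_separatesPoints
    (Algebra.adjoin ℝ (P : Set C(X, ℝ)))
    (Set.separatesPoints_mono (Set.image_mono Algebra.subset_adjoin) hP)
  have adjoin_eq := Algebra.adjoin_eq_span ℝ (P : Set C(X, ℝ))
  rw [P.closure_eq] at adjoin_eq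
  rw [← adjoin_eq, dense_iff_closure_eq]
  exact congrArg SetLike.coe hdense

lemma dense_span_range_expFamily {W : Type*} [AddMonoid W] {U : W →+ C(X, ℝ)}
    (hU : (Set.range fun w => ⇑(U w)).SeparatesPoints) :
    Dense (Submodule.span ℝ (Set.range (expFamily U)) : Set C(X, ℝ)) := by
  rw [← MonoidHom.coe_mrange]
  refine dense_span_submonoid_of_separatesPoints _ fun x y hxy => ?_
  obtain ⟨_, ⟨w, rfl⟩, hw⟩ := hU hxy
  exact ⟨_, ⟨_, ⟨.ofAdd w, rfl⟩, rfl⟩, Real.exp_injective.ne hw⟩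

theorem stmt5_general {W : Type*} [AddCommGroup W] [Module ℝ W] [Nontrivial W]
    (U : W →ₗ[ℝ] C(X, ℝ)) (hU : (Set.range fun w => ⇑(U w)).SeparatesPoints) {φ : ℝ → ℝ}
    (hφ : Continuous φ) {a b : ℝ} (ha : Tendsto φ atBot (𝓝 a)) (hb : Tendsto φ atTop (𝓝 b))
    (hab : a ≠ b) :
    Dense (Submodule.span ℝ
      {g : C(X, ℝ) | ∃ w : W, w ≠ 0 ∧ ∃ l : ℝ, ⇑g = fun x => φ (U w x + l)} : Set C(X, ℝ)) := by
  set S := {g : C(X, ℝ) | ∃ w : W, w ≠ 0 ∧ ∃ l : ℝ, ⇑g = fun x => φ (U w x + l)}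
  set V := (Submodule.span ℝ S).topologicalClosure
  have hV : IsClosed (V : Set C(X, ℝ)) := Submodule.isClosed_topologicalClosure _
  have dilate_mem (w : W) (hw : w ≠ 0) (k : ℝ) (hk : k ≠ 0) (l : ℝ) :
      (⟨φ, hφ⟩ : C(ℝ, ℝ)).comp (k • U w + .const X l) ∈ V :=
    Submodule.le_topologicalClosure _ <| Submodule.subset_span
      ⟨k • w, smul_ne_zero hk hw, l, by ext x; simp⟩
  have comp_mem (w : W) (f : C(ℝ, ℝ)) : f.comp (U w) ∈ V := by
    rcases eq_or_ne w 0 with rfl | hw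
    · obtain ⟨v, hv⟩ := exists_ne (0 : W)
      simpa using comp_mem_of_dilates_mem hV ha hb hab (dilate_mem v hv) (.const ℝ (f 0))
    · exact comp_mem_of_dilates_mem hV ha hb hab (dilate_mem w hw) f
  have span_le : Submodule.span ℝ (Set.range (expFamily U.toAddMonoidHom)) ≤ V :=
    Submodule.span_le.2 (Set.range_subset_iff.2 fun w => comp_mem w.toAdd _)
  exact ((dense_span_range_expFamily hU).mono span_le).of_closure

end ContinuousMap

section LinearForms

variable {ι : Type*} [Fintype ι]

/-- The restriction to `s` of the linear form `x ↦ ∑ i, w i * x i`, as a linear function of `w`. -/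
def linearFormOn (s : Set (ι → ℝ)) : (ι → ℝ) →ₗ[ℝ] C(s, ℝ) where
  toFun w := ⟨fun x => ∑ i, w i * (x : ι → ℝ) i, continuous_finsetSum _ fun i _ =>
    continuous_const.mul ((continuous_apply i).comp continuous_subtype_val)⟩
  map_add' v w := by ext x; simp [add_mul, Finset.sum_add_distrib]
  map_smul' k w := by ext x; simp [Finset.mul_sum, mul_assoc]

lemma separatesPoints_range_linearFormOn (s : Set (ι → ℝ)) :
    (Set.range fun w => ⇑(linearFormOn s w)).SeparatesPoints := by
  classical
  intro x y hxy
  obtain ⟨i, hi⟩ := Function.ne_iff.1 (Subtype.coe_injective.ne hxy)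
  exact ⟨_, ⟨Pi.single i 1, rfl⟩, by simpa [linearFormOn, Pi.single_apply] using hi⟩

end LinearForms

/-- Cybenko's Universal Approximation Theorem: for a continuous `φ` with
`φ(t) → 0` as `t → -∞` and `φ(t) → 1` as `t → +∞`, the span of the functions
`x ↦ φ(w·x + λ)`, `w ∈ ℝ^m \ {0}`, `λ ∈ ℝ`, is uniformly dense in `C(J^m, ℝ)`,
`J^m = [-1,1]^m`. -/
theorem stmt5 {m : ℕ} (hm : 1 ≤ m) (φ : ℝ → ℝ) (hφ : Continuous φ)
    (h0 : Tendsto φ atBot (𝓝 0)) (h1 : Tendsto φ atTop (𝓝 1)) :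
    Dense (Submodule.span ℝ
      {g : C(↥(Set.Icc (-1 : Fin m → ℝ) 1), ℝ) |
        ∃ w : Fin m → ℝ, w ≠ 0 ∧ ∃ lam : ℝ,
          ⇑g = fun x : ↥(Set.Icc (-1 : Fin m → ℝ) 1) =>
            φ ((∑ i, w i * (x : Fin m → ℝ) i) + lam)} :
      Set C(↥(Set.Icc (-1 : Fin m → ℝ) 1), ℝ)) := by
  have : NeZero m := ⟨by omega⟩
  exact stmt5_general (linearFormOn _) (separatesPoints_range_linearFormOn _) hφ h0 h1 zero_ne_one
end

section
/- (Kolmogorov superposition theorem.) For every integer n ≥ 1 there exist continuous functions ψ_{q,p} : ℝ → ℝ for 0 ≤ q ≤ 2n and 1 ≤ p ≤ n (independent of the function to be represented) such that: for every continuous function f : [0,1]^n → ℝ there exist continuous functions Φ_q : ℝ → ℝ (0 ≤ q ≤ 2n) with f(x₁, …, x_n) = Σ_{q=0}^{2n} Φ_q( Σ_{p=1}^{n} ψ_{q,p}(x_p) ) for all (x₁, …, x_n) ∈ [0,1]^n. -/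
/-!
By the Baire category theorem, almost every choice `ψ` of inner functions works. For a fixed
`f ≠ 0`, consider the `ψ` for which some outer functions of norm at most `‖f‖` reproduce `f` up to
an error below `l * ‖f‖`, where `l < 1` does not depend on `f`. These `ψ` form an open set. It is
dense: cover `[0,1]` by `2n + 1` families of short disjoint intervals so that each point is missed
by at most one family, and perturb `ψ q p` to be constant on each interval of the `q`-th family,
with generic values, so that `x ↦ ∑ p, ψ q p (x p)` takes distinct values on distinct boxes of the
`q`-th grid. Then `Φ q` may be prescribed to be about `f / (2n + 1)` on each box. Each `x` is
covered by at least `n + 1` of the grids, and the at most `n` others contribute an error of at most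
`2n / (2n + 1) * ‖f‖`. Intersecting over a countable dense set of `f` gives a residual set of `ψ`
which approximate every `f` with a fixed relative error less than `1`, and iterating on the
remainder makes the representation exact.
-/

open Filter Function Set Topology
open scoped BoundedContinuousFunction

section Approximation

variable {𝕜 E F : Type*} [NormedField 𝕜] [NormedAddCommGroup E] [NormedSpace 𝕜 E]
  [NormedAddCommGroup F] [NormedSpace 𝕜 F]

theorem surjective_of_forall_exists_norm_sub_le [CompleteSpace E] (T : E →L[𝕜] F) {C l : ℝ}
    (hC : 0 ≤ C) (hl₀ : 0 ≤ l) (hl₁ : l < 1)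
    (h : ∀ y, ∃ x, ‖x‖ ≤ C * ‖y‖ ∧ ‖y - T x‖ ≤ l * ‖y‖) : Surjective T := by
  intro y
  choose g hg_norm hg_approx using h
  let r : ℕ → F := fun k ↦ (fun z ↦ z - T (g z))^[k] y
  have r_succ (k : ℕ) : r (k + 1) = r k - T (g (r k)) := iterate_succ_apply' _ _ _
  have r_norm (k : ℕ) : ‖r k‖ ≤ l ^ k * ‖y‖ := by
    induction k with
    | zero => simp [r]
    | succ k ih =>
      calc ‖r (k + 1)‖ ≤ l * ‖r k‖ := r_succ k ▸ hg_approx (r k)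
        _ ≤ l * (l ^ k * ‖y‖) := by gcongr
        _ = l ^ (k + 1) * ‖y‖ := by ring
  have r_tendsto : Tendsto r atTop (𝓝 0) :=
    squeeze_zero_norm r_norm <| by
      simpa using (tendsto_pow_atTop_nhds_zero_of_lt_one hl₀ hl₁).mul_const ‖y‖
  have g_summable : Summable fun k ↦ g (r k) :=
    .of_norm_bounded (((summable_geometric_of_lt_one hl₀ hl₁).mul_right ‖y‖).mul_left C)
      fun k ↦ (hg_norm _).trans (mul_le_mul_of_nonneg_left (r_norm k) hC)
  have sum_eq (m : ℕ) : ∑ k ∈ Finset.range m, T (g (r k)) = y - r m := by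
    have (k : ℕ) : T (g (r k)) = r k - r (k + 1) := by rw [r_succ, sub_sub_cancel]
    simp only [this, Finset.sum_range_sub']
    rfl
  refine ⟨∑' k, g (r k), tendsto_nhds_unique (T.hasSum g_summable.hasSum).tendsto_sum_nat ?_⟩
  simpa [sum_eq] using r_tendsto.const_sub y

theorem exists_norm_sub_le_of_dense (T : E →L[𝕜] F) {D : Set F} (hD : Dense D) {C l l' : ℝ}
    (hC : 0 ≤ C) (hll' : l < l')
    (h : ∀ y ∈ D, y ≠ 0 → ∃ x, ‖x‖ ≤ C * ‖y‖ ∧ ‖y - T x‖ ≤ l * ‖y‖) (y : F) :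
    ∃ x, ‖x‖ ≤ 2 * C * ‖y‖ ∧ ‖y - T x‖ ≤ l' * ‖y‖ := by
  obtain rfl | hy := eq_or_ne y 0
  · exact ⟨0, by simp⟩
  have hy_pos : 0 < ‖y‖ := norm_pos_iff.2 hy
  have h_norm : ∀ᶠ z in 𝓝 y, ‖z‖ < 2 * ‖y‖ :=
    continuous_norm.continuousAt.eventually_lt_const (by linarith)
  have h_error : ∀ᶠ z in 𝓝 y, ‖y - z‖ + l * ‖z‖ < l' * ‖y‖ := by
    have h_cont : ContinuousAt (fun z ↦ ‖y - z‖ + l * ‖z‖) y := by fun_prop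
    exact h_cont.eventually_lt_const (by simpa using by gcongr)
  obtain ⟨z, hzD, hz, hz_norm, hz_error⟩ :=
    ((mem_closure_iff_frequently.1 (hD y)).and_eventually
      ((eventually_ne_nhds hy).and (h_norm.and h_error))).exists
  obtain ⟨x, hx_norm, hx_approx⟩ := h z hzD hz
  refine ⟨x, ?_, ?_⟩
  · calc ‖x‖ ≤ C * ‖z‖ := hx_norm
      _ ≤ C * (2 * ‖y‖) := by gcongr
      _ = 2 * C * ‖y‖ := by ring
  · calc ‖y - T x‖ ≤ ‖y - z‖ + ‖z - T x‖ := norm_sub_le_norm_sub_add_norm_sub ..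
      _ ≤ ‖y - z‖ + l * ‖z‖ := by gcongr
      _ ≤ l' * ‖y‖ := hz_error.le

end Approximation

theorem norm_sub_average_le {κ E : Type*} [Fintype κ] [Nonempty κ] [NormedAddCommGroup E]
    [NormedSpace ℝ E] {a : E} {b : κ → E} {C ω : ℝ} (hω : 0 ≤ ω) (ha : ‖a‖ ≤ C)
    (hb : ∀ q, ‖b q‖ ≤ C) (s : Finset κ) (hs : ∀ q ∉ s, ‖a - b q‖ ≤ ω) :
    ‖a - (Fintype.card κ : ℝ)⁻¹ • ∑ q, b q‖ ≤ ω + 2 * s.card / Fintype.card κ * C := by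
  classical
  have h_card : (Fintype.card κ : ℝ) ≠ 0 := by simp
  have h_term (q : κ) : ‖a - b q‖ ≤ ω + if q ∈ s then 2 * C else 0 := by
    split_ifs with hq
    · linarith [norm_sub_le a (b q), hb q]
    · simpa using hs q hq
  have h_avg : a - (Fintype.card κ : ℝ)⁻¹ • ∑ q, b q
      = (Fintype.card κ : ℝ)⁻¹ • ∑ q, (a - b q) := by
    rw [Finset.sum_sub_distrib, Finset.sum_const, Finset.card_univ, smul_sub,
      ← Nat.cast_smul_eq_nsmul ℝ, inv_smul_smul₀ h_card]
  calc ‖a - (Fintype.card κ : ℝ)⁻¹ • ∑ q, b q‖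
      = (Fintype.card κ : ℝ)⁻¹ * ‖∑ q, (a - b q)‖ := by
        rw [h_avg, norm_smul, Real.norm_of_nonneg (by positivity)]
    _ ≤ (Fintype.card κ : ℝ)⁻¹ * ∑ q, (ω + if q ∈ s then 2 * C else 0) := by
        gcongr
        exact norm_sum_le_of_le _ fun q _ ↦ h_term q
    _ = ω + 2 * s.card / Fintype.card κ * C := by
        rw [Finset.sum_add_distrib, Finset.sum_const, Finset.card_univ, Finset.sum_ite_mem,
          Finset.univ_inter, Finset.sum_const]
        simp only [nsmul_eq_mul]
        field_simp

theorem exists_finset_card_le_of_encard_le {ι κ : Type*} [Fintype ι] {B : ι → Set κ} {d : ι → ℕ}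
    (hB : ∀ p, (B p).encard ≤ d p) :
    ∃ s : Finset κ, s.card ≤ ∑ p, d p ∧ ∀ q ∉ s, ∀ p, q ∉ B p := by
  classical
  choose B_finite B_ncard using fun p ↦ Set.encard_le_coe_iff_finite_ncard_le.1 (hB p)
  refine ⟨Finset.univ.biUnion fun p ↦ (B_finite p).toFinset, ?_, by simp⟩
  refine Finset.card_biUnion_le.trans (Finset.sum_le_sum fun p _ ↦ ?_)
  rw [← Set.ncard_eq_toFinset_card (B p) (B_finite p)]
  exact B_ncard p

theorem dense_setOf_apply_ne_zero {E : Type*} [AddCommGroup E] [Module ℝ E] [TopologicalSpace E]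
    [ContinuousAdd E] [ContinuousSMul ℝ E] {L : E →ₗ[ℝ] ℝ} (hL : L ≠ 0) :
    Dense {v | L v ≠ 0} := by
  have h_interior : interior (LinearMap.ker L : Set E) = ∅ := by
    by_contra! h
    exact hL (LinearMap.ker_eq_top.1 (Submodule.eq_top_of_nonempty_interior' _ h))
  exact interior_eq_empty_iff_dense_compl.1 h_interior

theorem dense_setOf_injective_sum {ι : Type*} [Fintype ι] {J : ι → Type*} [∀ p, Finite (J p)] :
    Dense {v : ∀ p, J p → ℝ | Injective fun j : ∀ p, J p ↦ ∑ p, v p (j p)} := by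
  classical
  let S (a : ∀ p, J p) : (∀ p, J p → ℝ) →L[ℝ] ℝ :=
    ∑ p, (ContinuousLinearMap.proj (φ := fun _ : J p ↦ ℝ) (a p)).comp (ContinuousLinearMap.proj p)
  have S_apply (a v) : S a v = ∑ p, v p (a p) := by simp [S]
  have S_ne {a b : ∀ p, J p} (hab : a ≠ b) : S a - S b ≠ 0 := by
    obtain ⟨p₀, hp₀⟩ := ne_iff.1 hab
    have h_single (c : ∀ p, J p) : S c (Pi.single p₀ (Pi.single (a p₀) 1))
        = (Pi.single (a p₀) 1 : J p₀ → ℝ) (c p₀) := by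
      rw [S_apply, Finset.sum_eq_single_of_mem p₀ (Finset.mem_univ _) fun p _ hp ↦ by simp [hp],
        Pi.single_eq_same]
    intro h
    simpa [h_single, Pi.single_apply, hp₀.symm] using
      DFunLike.congr_fun h (Pi.single p₀ (Pi.single (a p₀) 1))
  have h_dense : Dense (⋂ ab : {ab : (∀ p, J p) × (∀ p, J p) // ab.1 ≠ ab.2},
      {v | (S ab.1.1 - S ab.1.2) v ≠ 0}) :=
    dense_iInter_of_isOpen
      (fun _ ↦ isOpen_ne_fun (ContinuousLinearMap.continuous _) continuous_const)
      fun ab ↦ dense_setOf_apply_ne_zero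
        (L := (S ab.1.1 - S ab.1.2).toLinearMap) (by exact_mod_cast S_ne ab.2)
  refine h_dense.mono fun v hv a b hab ↦ ?_
  by_contra hne
  exact mem_iInter.1 hv ⟨(a, b), hne⟩ (by simpa [S_apply, sub_eq_zero] using hab)

theorem isClosedEmbedding_sigma_val {X J : Type*} [TopologicalSpace X] [CompactSpace X] [T2Space X]
    [Finite J] {A : J → Set X} (hA : ∀ j, IsClosed (A j)) (hdisj : Pairwise (Disjoint on A)) :
    IsClosedEmbedding fun x : Σ j, A j ↦ (x.2 : X) := by
  have (j : J) : CompactSpace (A j) := isCompact_iff_compactSpace.1 (hA j).isCompact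
  refine (continuous_sigma fun _ ↦ continuous_subtype_val).isClosedEmbedding ?_
  rintro ⟨i, x, hx⟩ ⟨j, y, hy⟩ rfl
  obtain rfl := hdisj.eq (not_disjoint_iff.2 ⟨x, hx, hy⟩)
  rfl

theorem exists_norm_sub_le_eqOn_const {X J : Type*} [TopologicalSpace X] [CompactSpace X]
    [T2Space X] [Finite J] {A : J → Set X} (hA : ∀ j, IsClosed (A j))
    (hdisj : Pairwise (Disjoint on A)) (φ : C(X, ℝ)) {v : J → ℝ} {δ : ℝ} (hδ : 0 ≤ δ)
    (hv : ∀ j, ∀ x ∈ A j, dist (φ x) (v j) ≤ δ) :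
    ∃ φ' : C(X, ℝ), ‖φ' - φ‖ ≤ δ ∧ ∀ j, EqOn φ' (fun _ ↦ v j) (A j) := by
  have h_bound (x : Σ j, A j) : ‖v x.1 - φ x.2‖ ≤ δ := by
    simpa [dist_eq_norm, norm_sub_rev] using hv x.1 x.2 x.2.2
  let correction : (Σ j, A j) →ᵇ ℝ :=
    .ofNormedAddCommGroup (fun x ↦ v x.1 - φ x.2) (continuous_sigma fun j ↦ by fun_prop) δ h_bound
  obtain ⟨H, H_norm, hH⟩ :=
    BoundedContinuousFunction.exists_extension_norm_eq_of_isClosedEmbedding correction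
      (isClosedEmbedding_sigma_val hA hdisj)
  have H_le : ‖H‖ ≤ δ := H_norm.trans_le ((BoundedContinuousFunction.norm_le hδ).2 h_bound)
  refine ⟨φ + H.toContinuousMap, ?_, fun j x hx ↦ ?_⟩
  · rw [add_sub_cancel_left, ContinuousMap.norm_le _ hδ]
    exact fun x ↦ (H.norm_coe_le_norm x).trans H_le
  · have Hx : H x = v j - φ x := congrFun hH ⟨j, x, hx⟩
    simp [Hx]

theorem exists_norm_le_interpolation {Y J : Type*} [TopologicalSpace Y] [T4Space Y]
    [Finite J] {s : J → Y} (hs : Injective s) {c : J → ℝ} {C : ℝ} (hC : 0 ≤ C)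
    (hc : ∀ j, ‖c j‖ ≤ C) : ∃ Φ : Y →ᵇ ℝ, ‖Φ‖ ≤ C ∧ ∀ j, Φ (s j) = c j := by
  let _ : TopologicalSpace J := ⊥
  have : DiscreteTopology J := ⟨rfl⟩
  have hs_closed : IsClosedEmbedding s :=
    .of_continuous_injective_isClosedMap continuous_of_discreteTopology hs
      fun t _ ↦ (t.toFinite.image s).isClosed
  obtain ⟨Φ, Φ_norm, hΦ⟩ :=
    BoundedContinuousFunction.exists_extension_norm_eq_of_isClosedEmbedding
      (.ofNormedAddCommGroup c continuous_of_discreteTopology C hc) hs_closed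
  exact ⟨Φ, Φ_norm.trans_le ((BoundedContinuousFunction.norm_le hC).2 hc), congrFun hΦ⟩

theorem eventually_forall_dist_lt {X Y : Type*} [PseudoMetricSpace X] [CompactSpace X]
    [PseudoMetricSpace Y] (f : C(X, Y)) {ε : ℝ} (hε : 0 < ε) :
    ∀ᶠ η in 𝓝[>] (0 : ℝ), ∀ x y, dist x y < η → dist (f x) (f y) < ε := by
  obtain ⟨δ, hδ, h⟩ := Metric.uniformContinuous_iff.1
    (CompactSpace.uniformContinuous_of_continuous f.continuous) ε hε
  filter_upwards [Ioo_mem_nhdsGT hδ] with η hη x y hxy using h (hxy.trans hη.2)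

theorem exists_norm_le_forall_dist_lt {X E : Type*} [TopologicalSpace X] [CompactSpace X]
    [SeminormedAddCommGroup E] (f : C(X, E)) {S : Set X} {ε : ℝ}
    (h : ∀ x ∈ S, ∀ y ∈ S, dist (f x) (f y) < ε) :
    ∃ c, ‖c‖ ≤ ‖f‖ ∧ ∀ x ∈ S, dist (f x) c < ε := by
  obtain rfl | ⟨y, hy⟩ := S.eq_empty_or_nonempty
  · exact ⟨0, by simp⟩
  · exact ⟨f y, f.norm_coe_le_norm y, fun x hx ↦ h x hx y hy⟩

/-- `X` admits, at every scale, `κ`-indexed finite families of disjoint closed sets such that each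
point of `X` is missed by at most `d` of the families. By a theorem of Ostrand, a compact metric
space has this property for all finite `κ` if and only if its covering dimension is at most `d`. The
size of the sets is bounded through `dist`, which avoids the junk value of `Metric.diam` on
unbounded sets. -/
def HasOstrandCovers (κ X : Type*) [PseudoMetricSpace X] (d : ℕ) : Prop :=
  ∀ η > 0, ∃ (M : ℕ) (A : κ → Fin M → Set X),
    (∀ q j, IsClosed (A q j)) ∧ (∀ q, Pairwise (Disjoint on A q)) ∧
      (∀ q j, ∀ x ∈ A q j, ∀ y ∈ A q j, dist x y < η) ∧ ∀ x, {q | x ∉ ⋃ j, A q j}.encard ≤ d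

/-- The `j`-th interval of the `q`-th family in Kolmogorov's covering of the line: for fixed `q`
these intervals have length `K - 1` and period `K`, and increasing `q` shifts the family by one to
the left. -/
def shiftedInterval (K : ℕ) (q j : ℤ) : Set ℝ :=
  Icc (K * j - q) (K * j - q + (K - 1))

theorem disjoint_shiftedInterval {K : ℕ} {q j j' : ℤ} (h : j ≠ j') :
    Disjoint (shiftedInterval K q j) (shiftedInterval K q j') := by
  wlog hlt : j < j' generalizing j j'
  · exact (this h.symm (h.lt_or_gt.resolve_left hlt)).symm
  refine disjoint_left.2 fun t ht ht' ↦ ?_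
  have : (K : ℝ) * (j + 1) ≤ K * j' := by gcongr; exact_mod_cast hlt
  linarith [ht.2, ht'.1]

theorem mem_shiftedInterval_of_floor_emod_ne {K : ℕ} [NeZero K] {q : ℤ} {t : ℝ}
    (h : (⌊t⌋ + q) % K ≠ K - 1) : t ∈ shiftedInterval K q ((⌊t⌋ + q) / K) := by
  have hK : (0 : ℤ) < K := by exact_mod_cast NeZero.pos K
  have h_div := Int.mul_ediv_add_emod (⌊t⌋ + q) K
  have h_emod_nonneg := Int.emod_nonneg (⌊t⌋ + q) hK.ne'
  have h_emod_lt := Int.emod_lt_of_pos (⌊t⌋ + q) hK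
  have h_lower : K * ((⌊t⌋ + q) / K) - q ≤ ⌊t⌋ := by lia
  have h_upper : ⌊t⌋ + 1 ≤ K * ((⌊t⌋ + q) / K) - q + (K - 1) := by lia
  constructor
  · exact le_trans (by exact_mod_cast h_lower) (Int.floor_le t)
  · exact (Int.lt_floor_add_one t).le.trans (by exact_mod_cast h_upper)

theorem floor_add_emod_eq_of_forall_notMem {K N q : ℕ} {x : ℝ} (hx : x ∈ Icc 0 1) (hq : q < K)
    (h : ∀ j : Fin (N + 1), N * K * x ∉ shiftedInterval K q j) :
    (⌊N * K * x⌋ + (q : ℤ)) % K = K - 1 := by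
  have : NeZero K := ⟨by lia⟩
  by_contra h_emod
  have h_mem := mem_shiftedInterval_of_floor_emod_ne h_emod
  have h_floor_nonneg : 0 ≤ ⌊N * K * x⌋ := Int.floor_nonneg.2 (mul_nonneg (by positivity) hx.1)
  have h_floor_le : ⌊N * K * x⌋ ≤ N * K := by
    refine Int.floor_le_iff.2 ?_
    push_cast
    linarith [mul_le_of_le_one_right (by positivity : 0 ≤ N * (K : ℝ)) hx.2]
  have h_lt : (⌊N * K * x⌋ + (q : ℤ)) / K < N + 1 :=
    Int.ediv_lt_of_lt_mul (by lia) (by linarith [(by exact_mod_cast hq : (q : ℤ) < K)])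
  obtain ⟨j, hj⟩ := Int.eq_ofNat_of_zero_le
    (by positivity : 0 ≤ (⌊N * K * x⌋ + (q : ℤ)) / K)
  rw [hj] at h_mem h_lt
  exact h ⟨j, by exact_mod_cast h_lt⟩ h_mem

theorem hasOstrandCovers_Icc (K : ℕ) [NeZero K] : HasOstrandCovers (Fin K) (Icc (0 : ℝ) 1) 1 := by
  intro η hη
  obtain ⟨N, hN⟩ := exists_nat_gt (1 / η)
  have hK : (0 : ℝ) < K := by exact_mod_cast NeZero.pos K
  have hN_pos : (0 : ℝ) < N := (by positivity : 0 < 1 / η).trans hN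
  refine ⟨N + 1, fun q j ↦ {x | N * K * (x : ℝ) ∈ shiftedInterval K q j}, fun q j ↦ ?_,
    fun q j j' hj ↦ ?_, fun q j x hx y hy ↦ ?_, fun x ↦ ?_⟩
  · exact isClosed_Icc.preimage (by fun_prop)
  · exact (disjoint_shiftedInterval (by simpa [Fin.ext_iff] using hj)).preimage
      (fun x : Icc (0 : ℝ) 1 ↦ N * K * (x : ℝ))
  · have h_scaled : N * K * dist x y ≤ K - 1 := by
      simpa [Subtype.dist_eq, Real.dist_eq, ← mul_sub, abs_mul, hK.le] using
        Real.dist_le_of_mem_Icc hx hy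
    have h_mesh : 1 < N * η := by rwa [div_lt_iff₀ hη] at hN
    refine lt_of_mul_lt_mul_left ?_ (by positivity : 0 ≤ N * (K : ℝ))
    calc N * K * dist x y ≤ K - 1 := h_scaled
      _ < K * (N * η) := by nlinarith
      _ = N * K * η := by ring
  · refine Set.encard_le_one_iff.2 fun q q' hq hq' ↦ ?_
    have h_emod : (⌊N * K * (x : ℝ)⌋ + (q : ℤ)) % K = (⌊N * K * (x : ℝ)⌋ + (q' : ℤ)) % K :=
      (floor_add_emod_eq_of_forall_notMem x.2 q.2 fun j hj ↦ hq (mem_iUnion.2 ⟨j, hj⟩)).trans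
        (floor_add_emod_eq_of_forall_notMem x.2 q'.2 fun j hj ↦ hq' (mem_iUnion.2 ⟨j, hj⟩)).symm
    have h_modEq : (q : ℕ) ≡ q' [MOD K] :=
      Int.natCast_modEq_iff.1 (Int.ModEq.add_left_cancel' _ h_emod)
    exact Fin.ext (h_modEq.eq_of_lt_of_lt q.2 q'.2)

section Superposition

variable {ι κ : Type*} [Fintype ι] [Fintype κ] {X : ι → Type*} [∀ p, MetricSpace (X p)]
  [∀ p, CompactSpace (X p)]

/-- The operator assigning to outer functions `Φ` the superposition
`x ↦ ∑ q, Φ q (∑ p, ψ q p (x p))` with the inner functions `ψ`. Outer functions are taken bounded so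
that they form a Banach space. -/
noncomputable def superposition (ψ : κ → ∀ p, C(X p, ℝ)) :
    (κ → ℝ →ᵇ ℝ) →L[ℝ] C(∀ p, X p, ℝ) :=
  LinearMap.mkContinuous
    { toFun Φ := ⟨fun x ↦ ∑ q, Φ q (∑ p, ψ q p (x p)), by fun_prop⟩
      map_add' Φ Φ' := by ext x; simp [Finset.sum_add_distrib]
      map_smul' c Φ := by ext x; simp [Finset.mul_sum] }
    (Fintype.card κ) fun Φ ↦ by
      refine (ContinuousMap.norm_le _ (by positivity)).2 fun x ↦ ?_
      have h_term (q : κ) : ‖Φ q (∑ p, ψ q p (x p))‖ ≤ ‖Φ‖ :=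
        ((Φ q).norm_coe_le_norm _).trans (norm_le_pi_norm Φ q)
      simpa using norm_sum_le_of_le Finset.univ fun q _ ↦ h_term q

theorem superposition_apply (ψ : κ → ∀ p, C(X p, ℝ)) (Φ : κ → ℝ →ᵇ ℝ) (x : ∀ p, X p) :
    superposition ψ Φ x = ∑ q, Φ q (∑ p, ψ q p (x p)) :=
  rfl

theorem continuous_superposition_left (Φ : κ → ℝ →ᵇ ℝ) :
    Continuous fun ψ : κ → ∀ p, C(X p, ℝ) ↦ superposition ψ Φ := by
  refine ContinuousMap.continuous_of_continuous_uncurry _ ?_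
  simp only [uncurry_def, superposition_apply]
  fun_prop

/-- The inner functions with which some outer functions of norm at most `‖f‖` approximate `f` with
relative error less than `l`. -/
def approximators (κ : Type*) [Fintype κ] (l : ℝ) (f : C(∀ p, X p, ℝ)) :
    Set (κ → ∀ p, C(X p, ℝ)) :=
  {ψ | ∃ Φ : κ → ℝ →ᵇ ℝ, ‖Φ‖ ≤ ‖f‖ ∧ ‖f - superposition ψ Φ‖ < l * ‖f‖}

theorem isOpen_approximators (l : ℝ) (f : C(∀ p, X p, ℝ)) : IsOpen (approximators κ l f) := by
  have h_union : approximators κ l f = ⋃ Φ ∈ {Φ : κ → ℝ →ᵇ ℝ | ‖Φ‖ ≤ ‖f‖},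
      {ψ | ‖f - superposition ψ Φ‖ < l * ‖f‖} := by
    ext ψ
    simp [approximators]
  rw [h_union]
  exact isOpen_biUnion fun Φ _ ↦
    isOpen_lt (continuous_const.sub (continuous_superposition_left Φ)).norm continuous_const

section Perturbation

variable {J : ι → Type*} [∀ p, Finite (J p)] {A : ∀ p, J p → Set (X p)}

theorem exists_perturbation_injective_sum (hA : ∀ p j, IsClosed (A p j))
    (hdisj : ∀ p, Pairwise (Disjoint on A p)) (φ : ∀ p, C(X p, ℝ)) {ε : ℝ} (hε : 0 < ε)
    (hφ : ∀ p j, ∀ x ∈ A p j, ∀ y ∈ A p j, dist (φ p x) (φ p y) < ε) :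
    ∃ (φ' : ∀ p, C(X p, ℝ)) (v : ∀ p, J p → ℝ), (∀ p, ‖φ' p - φ p‖ ≤ 2 * ε) ∧
      (∀ p j, EqOn (φ' p) (fun _ ↦ v p j) (A p j)) ∧
        Injective fun j : ∀ p, J p ↦ ∑ p, v p (j p) := by
  have (p : ι) : Fintype (J p) := .ofFinite _
  choose w _ hw using fun p j ↦ exists_norm_le_forall_dist_lt (φ p) (hφ p j)
  obtain ⟨v, hv_inj, hvw⟩ := dense_setOf_injective_sum.exists_dist_lt w hε
  have hwv (p : ι) (j : J p) : dist (w p j) (v p j) < ε :=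
    ((dist_le_pi_dist (w p) (v p) j).trans (dist_le_pi_dist w v p)).trans_lt hvw
  have hv (p : ι) (j : J p) (x : X p) (hx : x ∈ A p j) : dist (φ p x) (v p j) ≤ 2 * ε := by
    linarith [dist_triangle (φ p x) (w p j) (v p j), hw p j x hx, hwv p j]
  choose φ' hφ'_norm hφ' using fun p ↦
    exists_norm_sub_le_eqOn_const (hA p) (hdisj p) (φ p) (by positivity) (hv p)
  exact ⟨φ', v, hφ'_norm, hφ', hv_inj⟩

theorem exists_outer_function {φ : ∀ p, C(X p, ℝ)} {v : ∀ p, J p → ℝ}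
    (hφ : ∀ p j, EqOn (φ p) (fun _ ↦ v p j) (A p j))
    (hv : Injective fun j : ∀ p, J p ↦ ∑ p, v p (j p)) (f : C(∀ p, X p, ℝ)) {ω : ℝ}
    (hf : ∀ j : ∀ p, J p, ∀ x ∈ univ.pi fun p ↦ A p (j p), ∀ y ∈ univ.pi fun p ↦ A p (j p),
      dist (f x) (f y) < ω) :
    ∃ Φ : ℝ →ᵇ ℝ, ‖Φ‖ ≤ ‖f‖ ∧
      ∀ x, (∀ p, x p ∈ ⋃ j, A p j) → ‖f x - Φ (∑ p, φ p (x p))‖ < ω := by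
  choose c hc_norm hc using fun j : ∀ p, J p ↦ exists_norm_le_forall_dist_lt f (hf j)
  obtain ⟨Φ, hΦ_norm, hΦ⟩ := exists_norm_le_interpolation hv (norm_nonneg f) hc_norm
  refine ⟨Φ, hΦ_norm, fun x hx ↦ ?_⟩
  choose j hj using fun p ↦ mem_iUnion.1 (hx p)
  have h_sum : ∑ p, φ p (x p) = ∑ p, v p (j p) := Finset.sum_congr rfl fun p _ ↦ hφ p (j p) (hj p)
  rw [h_sum, hΦ, ← dist_eq_norm]
  exact hc j x fun p _ ↦ hj p

end Perturbation

theorem norm_sub_superposition_average_le [Nonempty κ] {ψ : κ → ∀ p, C(X p, ℝ)}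
    {Φ : κ → ℝ →ᵇ ℝ} {f : C(∀ p, X p, ℝ)} {ω : ℝ} {m : ℕ} (hω : 0 ≤ ω) (hΦ : ∀ q, ‖Φ q‖ ≤ ‖f‖)
    (h : ∀ x, ∃ s : Finset κ, s.card ≤ m ∧ ∀ q ∉ s, ‖f x - Φ q (∑ p, ψ q p (x p))‖ ≤ ω) :
    ‖f - superposition ψ ((Fintype.card κ : ℝ)⁻¹ • Φ)‖ ≤
      ω + 2 * m / Fintype.card κ * ‖f‖ := by
  refine (ContinuousMap.norm_le _ (by positivity)).2 fun x ↦ ?_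
  obtain ⟨s, hs_card, hs⟩ := h x
  calc ‖(f - superposition ψ ((Fintype.card κ : ℝ)⁻¹ • Φ)) x‖
      = ‖f x - (Fintype.card κ : ℝ)⁻¹ • ∑ q, Φ q (∑ p, ψ q p (x p))‖ := by
        simp [superposition_apply]
    _ ≤ ω + 2 * s.card / Fintype.card κ * ‖f‖ :=
        norm_sub_average_le hω (f.norm_coe_le_norm x)
          (fun q ↦ ((Φ q).norm_coe_le_norm _).trans (hΦ q)) s hs
    _ ≤ ω + 2 * m / Fintype.card κ * ‖f‖ := by gcongr

variable {d : ι → ℕ}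

theorem dense_approximators [Nonempty κ] (hX : ∀ p, HasOstrandCovers κ (X p) (d p)) {l : ℝ}
    (hl : 2 * (∑ p, d p : ℕ) / Fintype.card κ < l) {f : C(∀ p, X p, ℝ)} (hf : f ≠ 0) :
    Dense (approximators κ l f) := by
  rw [Metric.dense_iff]
  intro ψ r hr
  have hf_norm : 0 < ‖f‖ := norm_pos_iff.2 hf
  obtain ⟨ω, hω, hω_lt⟩ : ∃ ω > 0, ω + 2 * (∑ p, d p : ℕ) / Fintype.card κ * ‖f‖ < l * ‖f‖ := by
    obtain ⟨ω, hω, hω_lt⟩ := exists_between (sub_pos.2 (mul_lt_mul_of_pos_right hl hf_norm))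
    exact ⟨ω, hω, lt_sub_iff_add_lt.1 hω_lt⟩
  obtain ⟨η, ⟨hψη, hfη⟩, hη⟩ :=
    (((eventually_all.2 fun q ↦ eventually_all.2 fun p ↦
      eventually_forall_dist_lt (ψ q p) (by positivity : 0 < r / 4)).and
        (eventually_forall_dist_lt f hω)).and self_mem_nhdsWithin).exists
  choose M A hA_closed hA_disj hA_dist hA_missed using fun p ↦ hX p η hη
  have hf_box (q : κ) (j : ∀ p, Fin (M p)) : ∀ x ∈ univ.pi fun p ↦ A p q (j p),
      ∀ y ∈ univ.pi fun p ↦ A p q (j p), dist (f x) (f y) < ω := fun x hx y hy ↦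
    hfη x y ((dist_pi_lt_iff hη).2 fun p ↦ hA_dist p q (j p) _ (hx p trivial) _ (hy p trivial))
  choose φ v hφ_norm hφ_eq hv using fun q ↦
    exists_perturbation_injective_sum (fun p ↦ hA_closed p q) (fun p ↦ hA_disj p q) (ψ q)
      (by positivity : 0 < r / 4) fun p j x hx y hy ↦ hψη q p x y (hA_dist p q j x hx y hy)
  choose Φ hΦ_norm hΦ using fun q ↦ exists_outer_function (hφ_eq q) (hv q) f (hf_box q)
  refine ⟨φ, ?_, (Fintype.card κ : ℝ)⁻¹ • Φ, ?_, ?_⟩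
  · refine Metric.closedBall_subset_ball (by linarith : 2 * (r / 4) < r) ?_
    simpa only [Metric.mem_closedBall, dist_eq_norm, Pi.sub_apply,
      pi_norm_le_iff_of_nonneg (by positivity : 0 ≤ 2 * (r / 4))] using hφ_norm
  · have h_card : (Fintype.card κ : ℝ)⁻¹ ≤ 1 :=
      inv_le_one_of_one_le₀ (by exact_mod_cast Fintype.card_pos)
    calc ‖(Fintype.card κ : ℝ)⁻¹ • Φ‖ = (Fintype.card κ : ℝ)⁻¹ * ‖Φ‖ := by
          rw [norm_smul, Real.norm_of_nonneg (by positivity)]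
      _ ≤ 1 * ‖f‖ := by gcongr; exact (pi_norm_le_iff_of_nonneg (norm_nonneg f)).2 hΦ_norm
      _ = ‖f‖ := one_mul _
  · refine (norm_sub_superposition_average_le hω.le hΦ_norm fun x ↦ ?_).trans_lt hω_lt
    obtain ⟨s, hs_card, hs⟩ := exists_finset_card_le_of_encard_le fun p ↦ hA_missed p (x p)
    exact ⟨s, hs_card, fun q hq ↦ (hΦ q x fun p ↦ not_not.1 (hs q hq p)).le⟩

theorem eventually_residual_surjective_superposition
    (hX : ∀ p, HasOstrandCovers κ (X p) (d p)) (hd : 2 * ∑ p, d p < Fintype.card κ) :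
    ∀ᶠ ψ in residual (κ → ∀ p, C(X p, ℝ)), Surjective (superposition ψ) := by
  have : Nonempty κ := Fintype.card_pos_iff.1 (by lia)
  have h_ratio : 2 * ((∑ p, d p : ℕ) : ℝ) / Fintype.card κ < 1 := by
    rw [div_lt_one (by positivity)]
    exact_mod_cast hd
  obtain ⟨l, hl, hl_lt⟩ := exists_between h_ratio
  obtain ⟨l', hll', hl'⟩ := exists_between hl_lt
  have hl'_nonneg : 0 ≤ l' := (lt_of_le_of_lt (by positivity) (hl.trans hll')).le
  obtain ⟨D, hD_countable, hD_dense⟩ := TopologicalSpace.exists_countable_dense C(∀ p, X p, ℝ)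
  have h_generic : ∀ᶠ ψ in residual (κ → ∀ p, C(X p, ℝ)),
      ∀ f ∈ D, f ≠ 0 → ψ ∈ approximators κ l f :=
    (eventually_countable_ball hD_countable).2 fun f _ ↦ eventually_imp_distrib_left.2 fun hf ↦
      residual_of_dense_open (isOpen_approximators l f) (dense_approximators hX hl hf)
  filter_upwards [h_generic] with ψ hψ
  refine surjective_of_forall_exists_norm_sub_le _ (by norm_num) hl'_nonneg hl'
    (exists_norm_sub_le_of_dense _ hD_dense zero_le_one hll' fun f hfD hf ↦ ?_)
  obtain ⟨Φ, hΦ_norm, hΦ⟩ := hψ f hfD hf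
  exact ⟨Φ, by simpa using hΦ_norm, hΦ.le⟩

end Superposition

theorem stmt6_general {ι κ : Type*} [Fintype ι] [Fintype κ] {Y : ι → Type*}
    [∀ p, MetricSpace (Y p)] {S : ∀ p, Set (Y p)} (hS : ∀ p, IsCompact (S p)) {d : ι → ℕ}
    (hcov : ∀ p, HasOstrandCovers κ (S p) (d p)) (hd : 2 * ∑ p, d p < Fintype.card κ) :
    ∃ ψ : κ → ∀ p, Y p → ℝ, (∀ q p, Continuous (ψ q p)) ∧
      ∀ f : (∀ p, Y p) → ℝ, ContinuousOn f (univ.pi S) →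
        ∃ Φ : κ → ℝ → ℝ, (∀ q, Continuous (Φ q)) ∧
          ∀ x ∈ univ.pi S, f x = ∑ q, Φ q (∑ p, ψ q p (x p)) := by
  have (p : ι) : CompactSpace (S p) := isCompact_iff_compactSpace.1 (hS p)
  have : TopologicalSpace.IsCompletelyPseudoMetrizableSpace (κ → ∀ p, C(S p, ℝ)) :=
    .of_completeSpace_pseudometrizable
  obtain ⟨ψ, hψ⟩ := (dense_of_mem_residual
    (eventually_residual_surjective_superposition hcov hd)).nonempty
  choose ψ' hψ' using fun q p ↦ (ψ q p).exists_restrict_eq (hS p).isClosed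
  refine ⟨fun q p ↦ ψ' q p, fun q p ↦ (ψ' q p).continuous, fun f hf ↦ ?_⟩
  obtain ⟨Φ, hΦ⟩ := hψ ⟨fun x ↦ f fun p ↦ x p,
    hf.comp_continuous (by fun_prop) fun x p _ ↦ (x p).2⟩
  refine ⟨fun q ↦ Φ q, fun q ↦ (Φ q).continuous, fun x hx ↦ ?_⟩
  have hψ'_apply (q : κ) (p : ι) : ψ' q p (x p) = ψ q p ⟨x p, hx p trivial⟩ :=
    DFunLike.congr_fun (hψ' q p) ⟨x p, hx p trivial⟩
  simp only [hψ'_apply]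
  exact (DFunLike.congr_fun hΦ fun p ↦ ⟨x p, hx p trivial⟩).symm

/-- Kolmogorov superposition theorem: for every `n ≥ 1` there exist
continuous inner functions `ψ q p : ℝ → ℝ` (`0 ≤ q ≤ 2n`, `1 ≤ p ≤ n`), independent of
`f`, such that every continuous `f : [0,1]^n → ℝ` can be written as
`f(x) = ∑_{q=0}^{2n} Φ_q (∑_{p=1}^n ψ_{q,p}(x_p))` on `[0,1]^n` for suitable continuous
outer functions `Φ_q : ℝ → ℝ`. -/
theorem stmt6 (n : ℕ) (hn : 1 ≤ n) :
    ∃ ψ : Fin (2 * n + 1) → Fin n → ℝ → ℝ,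
      (∀ q p, Continuous (ψ q p)) ∧
        ∀ f : (Fin n → ℝ) → ℝ, ContinuousOn f (Set.Icc (0 : Fin n → ℝ) 1) →
          ∃ Φ : Fin (2 * n + 1) → ℝ → ℝ,
            (∀ q, Continuous (Φ q)) ∧
              ∀ x ∈ Set.Icc (0 : Fin n → ℝ) 1,
                f x = ∑ q, Φ q (∑ p, ψ q p (x p)) := by
  simpa only [pi_univ_Icc, Pi.zero_def, Pi.one_def] using
    stmt6_general (fun _ : Fin n ↦ isCompact_Icc) (fun _ ↦ hasOstrandCovers_Icc (2 * n + 1))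
      (by simp)
end

section
/- Let Ω := Π_{j∈ℕ} (ℝ ∪ {∞}) be the countable product of the one-point compactification of ℝ, with the product topology (so Ω is compact), and let ℱ be its Borel σ-algebra. Let 𝒲 be a family of continuous functions X : Ω → ℝ which is separating, in the sense that the only finite signed Borel measure μ on Ω satisfying μ({ω : X(ω) > s}) = 0 and μ({ω : X(ω) = s}) = 0 for all X ∈ 𝒲 and all s ∈ ℝ is μ = 0. Let φ : ℝ → ℝ be continuous with lim_{t→−∞} φ(t) = 0 and lim_{t→+∞} φ(t) = 1. Then the linear span of the family {ω ↦ φ(X(ω) + λ) : X ∈ 𝒲, λ ∈ ℝ} is dense in C(Ω, ℝ) with respect to the uniform norm. -/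
open MeasureTheory Filter Topology

open Polynomial Set

/-!
Give `C(ℝ, ℝ)` the topology of locally uniform convergence and let `V` be the closed span of the
translates of `φ`. Letting the translation parameter tend to `±∞` shows that `V` contains the
constants. The slope of `l ↦ Φ(· + l)`, where `Φ` is a primitive of `φ`, is an average of
translates of `φ`, so a functional vanishing on `V` is constant along the translates of `Φ`; hence
the primitive of each translate lies in `V` up to an additive term which a second passage to the
limit shows to be in `V`. Thus `V` is stable under taking primitives, so it contains every `x ^ k`,
and `V = C(ℝ, ℝ)` by Weierstrass.

Consequently a functional on `C(Ω, ℝ)` which vanishes on all `φ(X + l)` vanishes on `f ∘ X` for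
every continuous `f`. Writing it as the difference of integration against two finite measures
`μ` and `ν`, this says that `X` has the same law under `μ` and `ν`.
-/

theorem mem_topologicalClosure_of_forall_dual {E : Type*} [AddCommGroup E] [Module ℝ E]
    [TopologicalSpace E] [IsTopologicalAddGroup E] [ContinuousSMul ℝ E] [LocallyConvexSpace ℝ E]
    {V : Submodule ℝ E} {x : E} (hx : ∀ L : StrongDual ℝ E, (∀ v ∈ V, L v = 0) → L x = 0) :
    x ∈ V.topologicalClosure := by
  by_contra hxV
  obtain ⟨L, u, hLu, hux⟩ := geometric_hahn_banach_closed_point V.topologicalClosure.convex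
    V.isClosed_topologicalClosure hxV
  have hu : 0 < u := by simpa using hLu 0 (zero_mem _)
  have hLV : ∀ v ∈ V, L v = 0 := by
    intro v hv
    by_contra hne
    have hlt := hLu ((u / L v) • v) (V.le_topologicalClosure (V.smul_mem _ hv))
    rw [map_smul, smul_eq_mul, div_mul_cancel₀ _ hne] at hlt
    exact hlt.false
  exact (hu.trans hux).ne' (hx L hLV)

/-- The translate `x ↦ φ (x + l)` of `φ`. -/
def rightTranslate (φ : C(ℝ, ℝ)) (l : ℝ) : C(ℝ, ℝ) := φ.comp (.addRight l)

@[simp]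
theorem rightTranslate_apply (φ : C(ℝ, ℝ)) (l x : ℝ) : rightTranslate φ l x = φ (x + l) := rfl

/-- The closed linear span of the translates of `φ` in `C(ℝ, ℝ)`, for the compact-open topology,
that is, the topology of locally uniform convergence. -/
def closedTranslateSpan (φ : C(ℝ, ℝ)) : Submodule ℝ C(ℝ, ℝ) :=
  (Submodule.span ℝ (range (rightTranslate φ))).topologicalClosure

theorem rightTranslate_mem_closedTranslateSpan (φ : C(ℝ, ℝ)) (l : ℝ) :
    rightTranslate φ l ∈ closedTranslateSpan φ :=
  Submodule.le_topologicalClosure _ (Submodule.subset_span ⟨l, rfl⟩)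

theorem isClosed_closedTranslateSpan (φ : C(ℝ, ℝ)) :
    IsClosed (closedTranslateSpan φ : Set C(ℝ, ℝ)) :=
  Submodule.isClosed_topologicalClosure _

theorem tendsto_rightTranslate_const {φ : C(ℝ, ℝ)} {l m : Filter ℝ} {c : ℝ}
    (hφ : Tendsto φ m (𝓝 c)) (hlm : ∀ x, Tendsto (fun p : ℝ × ℝ => p.2 + p.1) (l ×ˢ 𝓝 x) m) :
    Tendsto (rightTranslate φ) l (𝓝 (.const ℝ c)) := by
  rw [ContinuousMap.tendsto_iff_tendstoLocallyUniformly, tendstoLocallyUniformly_iff_filter]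
  exact fun x => tendsto_prod_filter_iff.1 (hφ.comp (hlm x))

theorem tendsto_rightTranslate_atTop {φ : C(ℝ, ℝ)} {c : ℝ} (hφ : Tendsto φ atTop (𝓝 c)) :
    Tendsto (rightTranslate φ) atTop (𝓝 (.const ℝ c)) :=
  tendsto_rightTranslate_const hφ fun _ => tendsto_snd.add_atTop tendsto_fst

theorem tendsto_rightTranslate_atBot {φ : C(ℝ, ℝ)} {c : ℝ} (hφ : Tendsto φ atBot (𝓝 c)) :
    Tendsto (rightTranslate φ) atBot (𝓝 (.const ℝ c)) :=
  tendsto_rightTranslate_const hφ fun _ => tendsto_snd.add_atBot tendsto_fst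

/-- The continuous linear operator sending `f` to its primitive vanishing at `0`. -/
noncomputable def primitive : C(ℝ, ℝ) →L[ℝ] C(ℝ, ℝ) where
  toFun f := ⟨fun x => ∫ t in (0 : ℝ)..x, f t,
    intervalIntegral.continuous_primitive (fun a b => f.continuous.intervalIntegrable a b) 0⟩
  map_add' f g := by
    ext x
    exact intervalIntegral.integral_add (f.continuous.intervalIntegrable _ _)
      (g.continuous.intervalIntegrable _ _)
  map_smul' c f := by
    ext x
    exact intervalIntegral.integral_smul c f
  cont := ContinuousMap.continuous_of_continuous_uncurry _
    (intervalIntegral.continuous_parametric_primitive_of_continuous continuous_eval)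

theorem primitive_apply (f : C(ℝ, ℝ)) (x : ℝ) : primitive f x = ∫ t in (0 : ℝ)..x, f t := rfl

theorem primitive_sub_primitive (f : C(ℝ, ℝ)) (x y : ℝ) :
    primitive f y - primitive f x = ∫ t in x..y, f t :=
  intervalIntegral.integral_interval_sub_left (f.continuous.intervalIntegrable _ _)
    (f.continuous.intervalIntegrable _ _)

theorem primitive_rightTranslate (φ : C(ℝ, ℝ)) (l : ℝ) :
    primitive (rightTranslate φ l) = rightTranslate (primitive φ) l - .const ℝ (primitive φ l) := by
  ext x
  rw [ContinuousMap.sub_apply, rightTranslate_apply, ContinuousMap.const_apply,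
    primitive_sub_primitive, primitive_apply]
  simp only [rightTranslate_apply, intervalIntegral.integral_comp_add_right, zero_add]

theorem hasDerivAt_dual_rightTranslate_primitive (L : StrongDual ℝ C(ℝ, ℝ)) (φ : C(ℝ, ℝ)) (a : ℝ) :
    HasDerivAt (fun l => L (rightTranslate (primitive φ) l)) (L (rightTranslate φ a)) a := by
  -- The slope at `a` of `l ↦ rightTranslate (primitive φ) l`, continuously extended to `l = a`.
  let G : C(ℝ × ℝ, ℝ) :=
    ⟨fun p => ∫ s in (0 : ℝ)..1, φ ((p.2 + a) + (p.1 - a) * s), by fun_prop⟩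
  have hGa : G.curry a = rightTranslate φ a := by
    ext x
    simp [G]
  have hslope : ∀ l ≠ a,
      L (G.curry l) = slope (fun l => L (rightTranslate (primitive φ) l)) a l := by
    intro l hl
    have hG : (l - a) • G.curry l
        = rightTranslate (primitive φ) l - rightTranslate (primitive φ) a := by
      ext x
      simp only [G, ContinuousMap.smul_apply, ContinuousMap.curry_apply, ContinuousMap.coe_mk,
        ContinuousMap.sub_apply, rightTranslate_apply, primitive_sub_primitive,
        intervalIntegral.smul_integral_comp_add_mul]
      ring_nf
    rw [slope_def_module, ← map_sub, ← hG, map_smul, inv_smul_smul₀ (sub_ne_zero.2 hl)]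
  rw [hasDerivAt_iff_tendsto_slope, ← hGa]
  exact (((L.continuous.comp G.curry.continuous).tendsto a).mono_left nhdsWithin_le_nhds).congr'
    (eventually_nhdsWithin_of_forall hslope)

theorem rightTranslate_primitive_sub_mem (φ : C(ℝ, ℝ)) (a b : ℝ) :
    rightTranslate (primitive φ) b - rightTranslate (primitive φ) a ∈ closedTranslateSpan φ := by
  refine mem_topologicalClosure_of_forall_dual fun L hL => ?_
  have hderiv : ∀ l, HasDerivAt (fun l => L (rightTranslate (primitive φ) l)) 0 l := fun l => by
    simpa only [hL _ (Submodule.subset_span ⟨l, rfl⟩)] using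
      hasDerivAt_dual_rightTranslate_primitive L φ l
  rw [map_sub, sub_eq_zero]
  exact is_const_of_deriv_eq_zero (fun l => (hderiv l).differentiableAt)
    (fun l => (hderiv l).deriv) b a

theorem const_eq_smul_sub_const {α : Type*} [TopologicalSpace α] {c₀ c₁ : ℝ} (hc : c₀ ≠ c₁)
    (c : ℝ) : ContinuousMap.const α c = (c / (c₁ - c₀)) • (.const α c₁ - .const α c₀) := by
  ext
  exact (div_mul_cancel₀ c (sub_ne_zero.2 hc.symm)).symm

section Sigmoidal

variable {φ : C(ℝ, ℝ)} {c₀ c₁ : ℝ} (h0 : Tendsto φ atBot (𝓝 c₀)) (h1 : Tendsto φ atTop (𝓝 c₁))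
  (hc : c₀ ≠ c₁)
include h0 h1 hc

theorem const_mem_closedTranslateSpan (c : ℝ) : .const ℝ c ∈ closedTranslateSpan φ := by
  have hmem : ∀ {l : Filter ℝ} [l.NeBot] {d : ℝ}, Tendsto (rightTranslate φ) l (𝓝 (.const ℝ d)) →
      .const ℝ d ∈ closedTranslateSpan φ := fun h =>
    (isClosed_closedTranslateSpan φ).mem_of_tendsto h
      (.of_forall (rightTranslate_mem_closedTranslateSpan φ))
  rw [const_eq_smul_sub_const hc]
  exact (closedTranslateSpan φ).smul_mem _
    (sub_mem (hmem (tendsto_rightTranslate_atTop h1)) (hmem (tendsto_rightTranslate_atBot h0)))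

theorem primitive_rightTranslate_sub_mem (a b : ℝ) :
    primitive (rightTranslate φ b) - primitive (rightTranslate φ a) ∈ closedTranslateSpan φ := by
  have hconst := const_mem_closedTranslateSpan h0 h1 hc (primitive φ b - primitive φ a)
  convert sub_mem (rightTranslate_primitive_sub_mem φ a b) hconst using 1
  ext x
  simp only [primitive_rightTranslate, ContinuousMap.sub_apply, ContinuousMap.const_apply]
  ring

theorem primitive_rightTranslate_sub_primitive_const_mem (l : ℝ) :
    primitive (rightTranslate φ l) - primitive (.const ℝ c₀) ∈ closedTranslateSpan φ :=
  (isClosed_closedTranslateSpan φ).mem_of_tendsto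
    (((primitive.continuous.tendsto _).comp (tendsto_rightTranslate_atBot h0)).const_sub _)
    (.of_forall fun a => primitive_rightTranslate_sub_mem h0 h1 hc a l)

theorem primitive_const_mem (c : ℝ) : primitive (.const ℝ c) ∈ closedTranslateSpan φ := by
  have hlim : primitive (.const ℝ c₁) - primitive (.const ℝ c₀) ∈ closedTranslateSpan φ :=
    (isClosed_closedTranslateSpan φ).mem_of_tendsto
      (((primitive.continuous.tendsto _).comp (tendsto_rightTranslate_atTop h1)).sub_const _)
      (.of_forall (primitive_rightTranslate_sub_primitive_const_mem h0 h1 hc))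
  rw [const_eq_smul_sub_const hc, map_smul, map_sub]
  exact (closedTranslateSpan φ).smul_mem _ hlim

theorem primitive_rightTranslate_mem (l : ℝ) :
    primitive (rightTranslate φ l) ∈ closedTranslateSpan φ := by
  simpa only [sub_add_cancel] using
    add_mem (primitive_rightTranslate_sub_primitive_const_mem h0 h1 hc l)
      (primitive_const_mem h0 h1 hc c₀)

theorem primitive_mem {f : C(ℝ, ℝ)} (hf : f ∈ closedTranslateSpan φ) :
    primitive f ∈ closedTranslateSpan φ := by
  have hle : Submodule.span ℝ (range (rightTranslate φ)) ≤
      (closedTranslateSpan φ).comap primitive.toLinearMap :=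
    Submodule.span_le.2 (range_subset_iff.2 (primitive_rightTranslate_mem h0 h1 hc))
  exact Submodule.topologicalClosure_minimal _ hle
    ((isClosed_closedTranslateSpan φ).preimage primitive.continuous) hf

end Sigmoidal

theorem iterate_primitive_one_apply (k : ℕ) (x : ℝ) :
    primitive^[k] 1 x = x ^ k / (k.factorial : ℝ) := by
  induction k generalizing x with
  | zero => simp
  | succ k ih =>
    simp only [Function.iterate_succ_apply', primitive_apply, ih, intervalIntegral.integral_div,
      integral_pow, Nat.factorial_succ]
    push_cast
    field_simp
    simp

theorem denseRange_toContinuousMap :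
    DenseRange (Polynomial.toContinuousMap : ℝ[X] → C(ℝ, ℝ)) := by
  intro f
  rw [mem_closure_iff_nhds_basis
    (nhds_basis_uniformity' Metric.uniformity_basis_dist.compactConvergenceUniformity)]
  rintro ⟨K, ε⟩ ⟨hK, hε⟩
  obtain ⟨p, hp⟩ := exists_polynomial_near_of_continuousOn (sInf K) (sSup K) f
    f.continuous.continuousOn ε hε
  refine ⟨_, ⟨p, rfl⟩, fun x hx => ?_⟩
  rw [mem_ofPred_eq, dist_comm]
  exact hp x (hK.isBounded.subset_Icc_sInf_sSup hx)

theorem toContinuousMap_eq_sum_smul_iterate_primitive_one (p : ℝ[X]) :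
    p.toContinuousMap
      = ∑ k ∈ p.support, (p.coeff k * (k.factorial : ℝ)) • primitive^[k] 1 := by
  ext x
  rw [toContinuousMap_apply, eval_eq_sum, Polynomial.sum, ContinuousMap.sum_apply]
  refine Finset.sum_congr rfl fun k _ => ?_
  rw [ContinuousMap.smul_apply, iterate_primitive_one_apply, smul_eq_mul]
  field_simp

theorem closedTranslateSpan_eq_top {φ : C(ℝ, ℝ)} {c₀ c₁ : ℝ} (h0 : Tendsto φ atBot (𝓝 c₀))
    (h1 : Tendsto φ atTop (𝓝 c₁)) (hc : c₀ ≠ c₁) : closedTranslateSpan φ = ⊤ := by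
  have hmaps : MapsTo primitive (closedTranslateSpan φ) (closedTranslateSpan φ) :=
    fun _ => primitive_mem h0 h1 hc
  have hiter : ∀ k : ℕ, primitive^[k] 1 ∈ closedTranslateSpan φ := fun k =>
    hmaps.iterate k (const_mem_closedTranslateSpan h0 h1 hc 1)
  have hpoly : ∀ p : ℝ[X], p.toContinuousMap ∈ closedTranslateSpan φ := fun p => by
    rw [toContinuousMap_eq_sum_smul_iterate_primitive_one]
    exact sum_mem fun k _ => (closedTranslateSpan φ).smul_mem _ (hiter k)
  exact Submodule.eq_top_iff'.2 fun f =>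
    (isClosed_closedTranslateSpan φ).closure_subset_iff.2 (range_subset_iff.2 hpoly)
      (denseRange_toContinuousMap f)

theorem dual_comp_eq_zero {Ω : Type*} [TopologicalSpace Ω]
    {φ : C(ℝ, ℝ)} {c₀ c₁ : ℝ} (h0 : Tendsto φ atBot (𝓝 c₀))
    (h1 : Tendsto φ atTop (𝓝 c₁)) (hc : c₀ ≠ c₁) {L : StrongDual ℝ C(Ω, ℝ)} {X : C(Ω, ℝ)}
    (hL : ∀ l, L ((rightTranslate φ l).comp X) = 0) (f : C(ℝ, ℝ)) : L (f.comp X) = 0 := by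
  let LX : StrongDual ℝ C(ℝ, ℝ) :=
    L.comp ⟨(ContinuousMap.compRightAlgHom ℝ ℝ X).toLinearMap, X.continuous_precomp⟩
  have hker : closedTranslateSpan φ ≤ LX.ker :=
    Submodule.topologicalClosure_minimal _ (Submodule.span_le.2 (range_subset_iff.2 hL))
      LX.isClosed_ker
  exact hker (closedTranslateSpan_eq_top h0 h1 hc ▸ Submodule.mem_top)

theorem posPart_smul_of_pos {E : Type*} [AddCommGroup E] [Lattice E] [Module ℝ E]
    [PosSMulMono ℝ E] {c : ℝ} (hc : 0 < c) (x : E) : (c • x)⁺ = c • x⁺ := by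
  have hsup : c • (x ⊔ 0) = c • x ⊔ c • 0 := (OrderIso.smulRight hc : E ≃o E).map_sup x 0
  rw [posPart_def, posPart_def, hsup, smul_zero]

section SolidNorm

variable {E : Type*} [NormedAddCommGroup E] [Lattice E] [HasSolidNorm E] [IsOrderedAddMonoid E]

theorem norm_posPart_add_le (x y : E) : ‖(x + y)⁺‖ ≤ ‖x⁺‖ + ‖y⁺‖ := by
  have hle : (x + y)⁺ ≤ x⁺ + y⁺ :=
    sup_le (add_le_add (le_posPart x) (le_posPart y))
      (add_nonneg (posPart_nonneg x) (posPart_nonneg y))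
  have habs : |(x + y)⁺| ≤ |x⁺ + y⁺| := by
    rw [abs_of_nonneg (posPart_nonneg _)]
    exact hle.trans (le_abs_self _)
  exact (norm_le_norm_of_abs_le_abs habs).trans (norm_add_le _ _)

-- The sublinear bound `‖L‖ * (‖f⁺‖ + ‖g⁺‖)` vanishes on the negative cone, so any functional it
-- dominates is positive.
theorem exists_positive_prod_apply_neg_eq [NormedSpace ℝ E] [PosSMulMono ℝ E]
    (L : StrongDual ℝ E) : ∃ Λ : E × E →ₚ[ℝ] ℝ, ∀ f, Λ (f, -f) = L f := by
  let M : E × E → ℝ := fun p => ‖L‖ * (‖p.1⁺‖ + ‖p.2⁺‖)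
  have hM_smul : ∀ c : ℝ, 0 < c → ∀ p, M (c • p) = c * M p := by
    intro c hc p
    simp only [M, Prod.smul_fst, Prod.smul_snd, posPart_smul_of_pos hc, norm_smul,
      Real.norm_of_nonneg hc.le]
    ring
  have hM_add : ∀ p q, M (p + q) ≤ M p + M q := by
    intro p q
    simp only [M, Prod.fst_add, Prod.snd_add, ← mul_add]
    gcongr ‖L‖ * ?_
    linarith only [norm_posPart_add_le p.1 q.1, norm_posPart_add_le p.2 q.2]
  have hLM : ∀ f, L f ≤ M (f, -f) := fun f => calc
    L f ≤ ‖L‖ * ‖f⁺ - f⁻‖ := by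
      rw [posPart_sub_negPart]
      exact (le_abs_self _).trans (L.le_opNorm f)
    _ ≤ ‖L‖ * (‖f⁺‖ + ‖(-f)⁺‖) := by
      rw [posPart_neg]
      gcongr
      exact norm_sub_le _ _
  obtain ⟨Λ, hΛL, hΛM⟩ := exists_extension_of_le_sublinear
    ((L.toLinearMap ∘ₗ LinearMap.fst ℝ E E).toPMap (LinearMap.graph (-LinearMap.id)))
    M hM_smul hM_add fun ⟨(f, g), (hg : g = -f)⟩ => hg ▸ hLM f
  refine ⟨.mk₀ Λ fun p hp => ?_, fun f => hΛL ⟨(f, -f), rfl⟩⟩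
  have hfst : (-p.1)⁺ = 0 := posPart_eq_zero.2 (neg_nonpos.2 hp.1)
  have hsnd : (-p.2)⁺ = 0 := posPart_eq_zero.2 (neg_nonpos.2 hp.2)
  simpa [M, hfst, hsnd] using hΛM (-p)

theorem exists_positive_sub_positive [NormedSpace ℝ E] [PosSMulMono ℝ E]
    (L : StrongDual ℝ E) : ∃ P N : E →ₚ[ℝ] ℝ, ∀ f, L f = P f - N f := by
  obtain ⟨Λ, hΛ⟩ := exists_positive_prod_apply_neg_eq L
  refine ⟨.mk₀ (Λ.toLinearMap ∘ₗ .inl ℝ E E) fun f hf => map_nonneg Λ ⟨hf, le_rfl⟩,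
    .mk₀ (Λ.toLinearMap ∘ₗ .inr ℝ E E) fun f hf => map_nonneg Λ ⟨le_rfl, hf⟩, fun f => ?_⟩
  change L f = Λ (f, 0) - Λ (0, f)
  rw [← hΛ, ← map_sub, Prod.mk_sub_mk, sub_zero, zero_sub]

end SolidNorm

instance {Ω : Type*} [TopologicalSpace Ω] [CompactSpace Ω] : HasSolidNorm C(Ω, ℝ) where
  solid _ g hfg := (ContinuousMap.norm_le _ (norm_nonneg g)).2 fun x =>
    (hfg x).trans (g.norm_coe_le_norm x)

section Measures
variable {Ω : Type*} [TopologicalSpace Ω] [CompactSpace Ω] [T2Space Ω] [MeasurableSpace Ω]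
  [BorelSpace Ω]

theorem exists_measure_integral_eq (P : C(Ω, ℝ) →ₚ[ℝ] ℝ) :
    ∃ μ : Measure Ω, IsFiniteMeasure μ ∧ ∀ f : C(Ω, ℝ), ∫ x, f x ∂μ = P f := by
  let Λ : CompactlySupportedContinuousMap Ω ℝ →ₚ[ℝ] ℝ :=
    .mk₀ { toFun f := P f.toContinuousMap
           map_add' f g := map_add P f.toContinuousMap g.toContinuousMap
           map_smul' c f := map_smul P c f.toContinuousMap }
      fun f hf => map_nonneg P (show 0 ≤ f.toContinuousMap from hf)
  exact ⟨RealRMK.rieszMeasure Λ, inferInstance, fun f =>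
    RealRMK.integral_rieszMeasure Λ (CompactlySupportedContinuousMap.continuousMapEquiv f)⟩

theorem exists_measure_eq_integral_sub (L : StrongDual ℝ C(Ω, ℝ)) :
    ∃ μ ν : Measure Ω, IsFiniteMeasure μ ∧ IsFiniteMeasure ν ∧
      ∀ f : C(Ω, ℝ), L f = ∫ x, f x ∂μ - ∫ x, f x ∂ν := by
  obtain ⟨P, N, hPN⟩ := exists_positive_sub_positive L
  obtain ⟨μ, hμ, hμP⟩ := exists_measure_integral_eq P
  obtain ⟨ν, hν, hνN⟩ := exists_measure_integral_eq N
  exact ⟨μ, ν, hμ, hν, fun f => by rw [hPN, hμP, hνN]⟩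

end Measures

theorem measure_preimage_eq_of_forall_integral_comp_eq {Ω : Type*} [TopologicalSpace Ω]
    [MeasurableSpace Ω] [OpensMeasurableSpace Ω] {Y : Type*} [TopologicalSpace Y]
    [HasOuterApproxClosed Y] [MeasurableSpace Y] [BorelSpace Y] {μ ν : Measure Ω}
    [IsFiniteMeasure μ] [IsFiniteMeasure ν] {X : Ω → Y} (hX : Continuous X)
    (h : ∀ f : C(Y, ℝ), ∫ ω, f (X ω) ∂μ = ∫ ω, f (X ω) ∂ν) {t : Set Y} (ht : MeasurableSet t) :
    μ (X ⁻¹' t) = ν (X ⁻¹' t) := by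
  have hlaw : μ.map X = ν.map X := ext_of_forall_integral_eq_of_IsFiniteMeasure fun f => by
    rw [integral_map hX.measurable.aemeasurable f.continuous.aestronglyMeasurable,
      integral_map hX.measurable.aemeasurable f.continuous.aestronglyMeasurable]
    exact h f
  rw [← Measure.map_apply hX.measurable ht, hlaw, Measure.map_apply hX.measurable ht]

theorem stmt7_general {Ω : Type*} [TopologicalSpace Ω] [CompactSpace Ω] [T2Space Ω]
    [MeasurableSpace Ω] [BorelSpace Ω] (𝒲 : Set (Ω → ℝ)) (h𝒲 : ∀ X ∈ 𝒲, Continuous X)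
    (hsep : ∀ μ₁ μ₂ : Measure Ω, IsFiniteMeasure μ₁ → IsFiniteMeasure μ₂ →
      (∀ X ∈ 𝒲, ∀ s : ℝ,
        μ₁ {ω | s < X ω} = μ₂ {ω | s < X ω} ∧ μ₁ {ω | X ω = s} = μ₂ {ω | X ω = s}) →
      μ₁ = μ₂)
    (φ : ℝ → ℝ) (hφ : Continuous φ) {c₀ c₁ : ℝ}
    (h0 : Tendsto φ atBot (𝓝 c₀)) (h1 : Tendsto φ atTop (𝓝 c₁)) (hc : c₀ ≠ c₁) :
    Dense (Submodule.span ℝ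
      {g : C(Ω, ℝ) | ∃ X ∈ 𝒲, ∃ lam : ℝ, ⇑g = fun ω => φ (X ω + lam)} : Set C(Ω, ℝ)) := by
  refine fun f => mem_topologicalClosure_of_forall_dual fun L hL => ?_
  obtain ⟨μ, ν, hμ, hν, hLμν⟩ := exists_measure_eq_integral_sub L
  have hcomp : ∀ X (hX : X ∈ 𝒲) (g : C(ℝ, ℝ)), L (g.comp ⟨X, h𝒲 X hX⟩) = 0 := fun X hX =>
    dual_comp_eq_zero (φ := ⟨φ, hφ⟩) h0 h1 hc fun l =>
      hL _ (Submodule.subset_span ⟨X, hX, l, rfl⟩)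
  have hpreimage : ∀ X ∈ 𝒲, ∀ t, MeasurableSet t → μ (X ⁻¹' t) = ν (X ⁻¹' t) := fun X hX _ =>
    measure_preimage_eq_of_forall_integral_comp_eq (h𝒲 X hX) fun g =>
      sub_eq_zero.1 ((hLμν _).symm.trans (hcomp X hX g))
  have hμν : μ = ν := hsep μ ν hμ hν fun X hX s =>
    ⟨hpreimage X hX (Ioi s) measurableSet_Ioi, hpreimage X hX {s} (measurableSet_singleton s)⟩
  rw [hLμν, hμν, sub_self]

/-- infinite-dimensional Cybenko theorem: let `Ω = ∏_{j∈ℕ} (ℝ ∪ {∞})` be the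
countable product of one-point compactifications of `ℝ`, and let `𝒲` be a separating
family of continuous random variables `X : Ω → ℝ` (the only finite signed Borel measure
`μ = μ₁ - μ₂` vanishing on all sets `{X > s}` and `{X = s}` is `0`). For any continuous
sigmoidal `φ` the span of `ω ↦ φ(X(ω) + λ)`, `X ∈ 𝒲`, `λ ∈ ℝ`, is uniformly dense in
`C(Ω, ℝ)`. -/
theorem stmt7 (𝒲 : Set ((ℕ → OnePoint ℝ) → ℝ)) (h𝒲 : ∀ X ∈ 𝒲, Continuous X)
    (hsep : ∀ μ₁ μ₂ : @Measure (ℕ → OnePoint ℝ) (borel (ℕ → OnePoint ℝ)),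
      @IsFiniteMeasure _ (borel (ℕ → OnePoint ℝ)) μ₁ →
      @IsFiniteMeasure _ (borel (ℕ → OnePoint ℝ)) μ₂ →
      (∀ X ∈ 𝒲, ∀ s : ℝ,
        μ₁ {ω | s < X ω} = μ₂ {ω | s < X ω} ∧ μ₁ {ω | X ω = s} = μ₂ {ω | X ω = s}) →
      μ₁ = μ₂)
    (φ : ℝ → ℝ) (hφ : Continuous φ)
    (h0 : Tendsto φ atBot (𝓝 0)) (h1 : Tendsto φ atTop (𝓝 1)) :
    Dense (Submodule.span ℝ
      {g : C(ℕ → OnePoint ℝ, ℝ) | ∃ X ∈ 𝒲, ∃ lam : ℝ, ⇑g = fun ω => φ (X ω + lam)} :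
      Set C(ℕ → OnePoint ℝ, ℝ)) := by
  let _ : MeasurableSpace (ℕ → OnePoint ℝ) := borel _
  have _ : BorelSpace (ℕ → OnePoint ℝ) := ⟨rfl⟩
  exact stmt7_general 𝒲 h𝒲 hsep φ hφ h0 h1 zero_ne_one
end

section
/- Let m ≥ 2 and let W ⊂ ℝ^m \ {0} be a finite set. Let ℋ_W denote the closed linear span in L²(J^m) of the functions {x ↦ φ(w·x) : φ : ℝ → ℂ bounded continuous, w ∈ W}, where J^m = [−1,1]^m with Lebesgue measure. Then the orthogonal complement L²(J^m) ⊖ ℋ_W is infinite-dimensional. -/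
open MeasureTheory

/-- Lebesgue measure restricted to the cube `J^m = [-1,1]^m`. -/
noncomputable def cubeMeasure (m : ℕ) : Measure (Fin m → ℝ) :=
  volume.restrict (Set.Icc (-1 : Fin m → ℝ) 1)

/-! Orthogonality to functions invariant under a translation can be produced by differencing:
if `g (x + v) = g x`, then `∫ (h (x + v) - h x) g x dx = 0` by translation invariance of the
measure. A ridge function `φ ∘ ℓ` is invariant under every vector of `ker ℓ`, so choose a nonzero
`vᵢ ∈ ker ℓᵢ` for each direction. Difference operators commute, hence `Δ_{v₁} ⋯ Δ_{vₙ} h` is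
orthogonal to all the ridge functions at once, for every continuous `h` supported in a small ball.
The operator `Δ_{v₁} ⋯ Δ_{vₙ}` is injective on such `h`, because a function with bounded support
and a nonzero period vanishes, and these `h` form an infinite-dimensional space. -/

open Set Metric Polynomial
open scoped fwdDiff

section MixedDiff

variable {G : Type*} [AddCommGroup G] (R M : Type*) [Ring R] [AddCommGroup M] [Module R M]

/-- The forward difference operator `Δ_[v]` as an `R`-linear endomorphism; Mathlib's `fwdDiffₗ` is
only `ℤ`-linear. -/
@[simps]
def fwdDiffEnd (v : G) : Module.End R (G → M) where
  toFun := Δ_[v]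
  map_add' := fwdDiff_add v
  map_smul' := fwdDiff_const_smul v

lemma commute_fwdDiffEnd (u v : G) : Commute (fwdDiffEnd R M u) (fwdDiffEnd R M v) := by
  ext f x
  simp only [Module.End.mul_apply, fwdDiffEnd_apply, fwdDiff, add_right_comm x u v]
  abel

variable {ι : Type*}

lemma pairwise_commute_fwdDiffEnd (v : ι → G) (s : Set ι) :
    s.Pairwise (Function.onFun Commute fun i => fwdDiffEnd R M (v i)) :=
  fun _ _ _ _ _ => commute_fwdDiffEnd R M _ _

/-- The mixed difference operator `∏ i ∈ s, Δ_[v i]`. -/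
def mixedDiff (v : ι → G) (s : Finset ι) : Module.End R (G → M) :=
  s.noncommProd (fun i => fwdDiffEnd R M (v i)) (pairwise_commute_fwdDiffEnd R M v s)

variable {R M}

@[simp]
lemma mixedDiff_empty (v : ι → G) (f : G → M) : mixedDiff R M v ∅ f = f := by
  simp [mixedDiff]

lemma mixedDiff_insert_apply [DecidableEq ι] (v : ι → G) {s : Finset ι} {i : ι} (hi : i ∉ s)
    (f : G → M) : mixedDiff R M v (insert i s) f = Δ_[v i] (mixedDiff R M v s f) := by
  rw [mixedDiff, Finset.noncommProd_insert_of_notMem _ _ _ _ hi]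
  rfl

lemma fwdDiff_mixedDiff_erase [DecidableEq ι] (v : ι → G) {s : Finset ι} {i : ι} (hi : i ∈ s)
    (f : G → M) : Δ_[v i] (mixedDiff R M v (s.erase i) f) = mixedDiff R M v s f := by
  rw [← mixedDiff_insert_apply v (s.notMem_erase i), Finset.insert_erase hi]

end MixedDiff

lemma integral_fwdDiff_mul_eq_zero {G A : Type*} [AddCommGroup G] [MeasurableSpace G]
    [MeasurableAdd G] [NormedRing A] [NormedSpace ℝ A] {μ : Measure G} [μ.IsAddRightInvariant]
    {v : G} {f g : G → A} (hg : Function.Periodic g v) (hfg : Integrable (fun x => f x * g x) μ) :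
    ∫ x, (Δ_[v] f) x * g x ∂μ = 0 := by
  have shift : ∀ x, f (x + v) * g x = f (x + v) * g (x + v) := fun x => by rw [hg]
  simp_rw [fwdDiff, sub_mul, shift]
  rw [integral_sub (hfg.comp_add_right v) hfg,
    integral_add_right_eq_self (fun x => f x * g x) v, sub_self]

lemma eq_zero_of_fwdDiff_eq_zero {E M : Type*} [NormedAddCommGroup E] [NormedSpace ℝ E]
    [AddCommGroup M] {v c : E} {r : ℝ} {f : E → M} (hv : v ≠ 0) (hf : EqOn f 0 (ball c r)ᶜ)
    (hΔ : Δ_[v] f = 0) : f = 0 := by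
  have period : Function.Periodic f v := fun x => sub_eq_zero.mp (congrFun hΔ x)
  ext x
  obtain ⟨n, hn⟩ := exists_nat_gt ((r + dist x c) / ‖v‖)
  rw [← period.nsmul n x]
  apply hf
  have escape : ‖n • v‖ ≤ dist (x + n • v) c + dist x c := by
    simpa [dist_eq_norm] using norm_sub_le (x + n • v - c) (x - c)
  rw [div_lt_iff₀ (norm_pos_iff.mpr hv), ← nsmul_eq_mul, ← RCLike.norm_nsmul ℝ] at hn
  simp only [mem_compl_iff, mem_ball, not_lt]
  linarith

section ContinuousVanishingOff

variable (𝕜 : Type*) [RCLike 𝕜]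

/-- The space of continuous functions vanishing outside `U`, which serve as test functions. It
replaces `C_c(U)`: on a ball, vanishing outside is easier to follow through translations than
compact support. -/
def continuousVanishingOff {X : Type*} [TopologicalSpace X] (U : Set X) :
    Submodule 𝕜 (X → 𝕜) where
  carrier := {f | Continuous f ∧ EqOn f 0 Uᶜ}
  zero_mem' := ⟨continuous_zero, fun _ _ => rfl⟩
  add_mem' hf hg := ⟨hf.1.add hg.1, fun x hx => by simp [hf.2 hx, hg.2 hx]⟩
  smul_mem' a _ hf := ⟨hf.1.const_smul a, fun x hx => by simp [hf.2 hx]⟩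

variable {𝕜} {E : Type*} [NormedAddCommGroup E]

lemma not_finiteDimensional_continuousVanishingOff_ball [NormedSpace ℝ E] [Nontrivial E] (c : E)
    {r : ℝ} (hr : 0 < r) : ¬ FiniteDimensional 𝕜 (continuousVanishingOff 𝕜 (ball c r)) := by
  intro hfin
  -- Radial functions suffice: a tent in the distance to `c` times a polynomial in that distance.
  let L : 𝕜[X] →ₗ[𝕜] continuousVanishingOff 𝕜 (ball c r) :=
    { toFun := fun p => ⟨fun x => ((max 0 (r - dist x c) : ℝ) : 𝕜) * p.eval ((dist x c : ℝ) : 𝕜),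
        by fun_prop, fun x hx => by simp [show r ≤ dist x c by simpa using hx]⟩
      map_add' := fun p q => by ext x; simp [mul_add]
      map_smul' := fun a p => by ext x; simp [mul_left_comm] }
  have hL : Function.Injective L := by
    refine (injective_iff_map_eq_zero L).mpr fun p hp => ?_
    refine p.eq_zero_of_infinite_isRoot (((Ioo_infinite hr).image
      (RCLike.ofReal_injective (K := 𝕜)).injOn).mono ?_)
    rintro _ ⟨t, ⟨ht0, htr⟩, rfl⟩
    obtain ⟨u, rfl⟩ := exists_norm_eq E ht0.le
    have hu : ((max 0 (r - ‖u‖) : ℝ) : 𝕜) * p.eval ((‖u‖ : ℝ) : 𝕜) = 0 := by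
      simpa [L] using congrFun (congrArg Subtype.val hp) (c + u)
    refine (mul_eq_zero.mp hu).resolve_left ?_
    exact RCLike.ofReal_ne_zero.mpr (lt_max_of_lt_right (sub_pos.mpr htr)).ne'
  exact Polynomial.not_finite (Module.Finite.of_injective L hL)

lemma fwdDiff_mem_continuousVanishingOff {v c : E} {r : ℝ} {f : E → 𝕜}
    (hf : f ∈ continuousVanishingOff 𝕜 (ball c r)) :
    Δ_[v] f ∈ continuousVanishingOff 𝕜 (ball c (r + ‖v‖)) := by
  refine ⟨(hf.1.comp (continuous_add_const v)).sub hf.1, fun x hx => ?_⟩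
  have far : r + ‖v‖ ≤ dist x c := by simpa using hx
  have near : dist x c ≤ ‖v‖ + dist (x + v) c := by
    simpa using dist_triangle_left x c (x + v)
  have hx₁ : f (x + v) = 0 := hf.2 (by simp only [mem_compl_iff, mem_ball]; linarith)
  have hx₂ : f x = 0 := hf.2 (by simp only [mem_compl_iff, mem_ball]; linarith [norm_nonneg v])
  simp [fwdDiff, hx₁, hx₂]

variable {ι : Type*} {v : ι → E} {c : E} {r : ℝ} {f : E → 𝕜}

lemma mixedDiff_mem_continuousVanishingOff (s : Finset ι)
    (hf : f ∈ continuousVanishingOff 𝕜 (ball c r)) :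
    mixedDiff 𝕜 𝕜 v s f ∈ continuousVanishingOff 𝕜 (ball c (r + ∑ i ∈ s, ‖v i‖)) := by
  classical
  induction s using Finset.induction_on with
  | empty => simpa using hf
  | insert i s hi ih =>
    rw [mixedDiff_insert_apply v hi, Finset.sum_insert hi, add_left_comm, add_comm ‖v i‖]
    exact fwdDiff_mem_continuousVanishingOff ih

lemma eq_zero_of_mixedDiff_eq_zero [NormedSpace ℝ E] {s : Finset ι} (hv : ∀ i ∈ s, v i ≠ 0)
    (hf : f ∈ continuousVanishingOff 𝕜 (ball c r)) (h0 : mixedDiff 𝕜 𝕜 v s f = 0) : f = 0 := by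
  classical
  induction s using Finset.induction_on with
  | empty => simpa using h0
  | insert i s hi ih =>
    rw [mixedDiff_insert_apply v hi] at h0
    obtain ⟨hvi, hvs⟩ := Finset.forall_mem_insert _ _ _ |>.mp hv
    exact ih hvs (eq_zero_of_fwdDiff_eq_zero hvi (mixedDiff_mem_continuousVanishingOff s hf).2 h0)

end ContinuousVanishingOff

section Lp

open scoped ENNReal InnerProductSpace

variable {𝕜 : Type*} [RCLike 𝕜] {E : Type*} [NormedAddCommGroup E] [MeasurableSpace E]
  [BorelSpace E] [ProperSpace E] {c : E} {r : ℝ}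

lemma memLp_of_mem_continuousVanishingOff {p : ℝ≥0∞} {ν : Measure E}
    [IsFiniteMeasureOnCompacts ν] {f : E → 𝕜} (hf : f ∈ continuousVanishingOff 𝕜 (ball c r)) :
    MemLp f p ν :=
  hf.1.memLp_of_hasCompactSupport <| .intro (isCompact_closedBall c r) fun _ hx =>
    hf.2 fun hx' => hx (ball_subset_closedBall hx')

/-- The map to `Lᵖ(ν)` from the continuous functions supported in a ball. -/
noncomputable def continuousVanishingOffToLp (𝕜 : Type*) [RCLike 𝕜] (c : E) (r : ℝ) (p : ℝ≥0∞)
    (ν : Measure E) [IsFiniteMeasureOnCompacts ν] :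
    continuousVanishingOff 𝕜 (ball c r) →ₗ[𝕜] Lp 𝕜 p ν where
  toFun f := (memLp_of_mem_continuousVanishingOff f.2).toLp f
  map_add' f g := MemLp.toLp_add (memLp_of_mem_continuousVanishingOff f.2)
    (memLp_of_mem_continuousVanishingOff g.2)
  map_smul' a f := MemLp.toLp_const_smul a (memLp_of_mem_continuousVanishingOff f.2)

lemma coeFn_continuousVanishingOffToLp {p : ℝ≥0∞} {ν : Measure E} [IsFiniteMeasureOnCompacts ν]
    (f : continuousVanishingOff 𝕜 (ball c r)) :
    continuousVanishingOffToLp 𝕜 c r p ν f =ᵐ[ν] f :=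
  (memLp_of_mem_continuousVanishingOff f.2).coeFn_toLp

variable {μ : Measure E} {K : Set E}

lemma continuousVanishingOffToLp_injective [IsFiniteMeasureOnCompacts μ] [μ.IsOpenPosMeasure]
    (hK : ball c r ⊆ K) (p : ℝ≥0∞) :
    Function.Injective (continuousVanishingOffToLp 𝕜 c r p (μ.restrict K)) := by
  refine (injective_iff_map_eq_zero _).mpr fun f hf => ?_
  have hf0 : f =ᵐ[μ.restrict (ball c r)] (0 : E → 𝕜) :=
    ae_restrict_of_ae_restrict_of_subset hK <|
      (coeFn_continuousVanishingOffToLp f).symm.trans ((Lp.eq_zero_iff_ae_eq_zero).mp hf)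
  have hball : EqOn f (0 : E → 𝕜) (ball c r) :=
    Measure.eqOn_open_of_ae_eq hf0 isOpen_ball f.2.1.continuousOn continuousOn_const
  ext x
  by_cases hx : x ∈ ball c r
  exacts [hball hx, f.2.2 hx]

lemma integrable_mul_of_memLp_restrict [IsFiniteMeasureOnCompacts μ] {f g : E → 𝕜}
    (hf : f ∈ continuousVanishingOff 𝕜 (ball c r)) (hK : ball c r ⊆ K)
    (hg : MemLp g 2 (μ.restrict K)) : Integrable (fun x => f x * g x) μ := by
  have hfg : IntegrableOn (fun x => f x * g x) K μ :=
    (memLp_of_mem_continuousVanishingOff (p := 2) hf).integrable_mul hg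
  refine hfg.integrable_of_forall_notMem_eq_zero fun x hx => ?_
  rw [hf.2 fun hx' => hx (hK hx'), Pi.zero_apply, zero_mul]

lemma inner_continuousVanishingOffToLp [IsFiniteMeasureOnCompacts μ] (hK : ball c r ⊆ K)
    {F : Lp 𝕜 2 (μ.restrict K)} {g : E → 𝕜} (hF : F =ᵐ[μ.restrict K] g)
    (f : continuousVanishingOff 𝕜 (ball c r)) :
    ⟪F, continuousVanishingOffToLp 𝕜 c r 2 (μ.restrict K) f⟫_𝕜 =
      ∫ x, f.1 x * star (g x) ∂μ := by
  have hfK : ∀ x ∉ K, f.1 x * star (g x) = 0 := fun x hx => by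
    rw [f.2.2 fun hx' => hx (hK hx'), Pi.zero_apply, zero_mul]
  rw [← setIntegral_eq_integral_of_forall_compl_eq_zero hfK, L2.inner_def]
  refine integral_congr_ae ?_
  filter_upwards [hF, coeFn_continuousVanishingOffToLp f] with x hFx hfx
  rw [hFx, hfx, RCLike.inner_apply, starRingEnd_apply]

variable {ι : Type*} {s : Finset ι} {v : ι → E}

lemma integral_mixedDiff_mul_eq_zero [IsFiniteMeasureOnCompacts μ] [μ.IsAddRightInvariant]
    {i : ι} (hi : i ∈ s) (hK : ball c (r + ∑ j ∈ s, ‖v j‖) ⊆ K) {f g : E → 𝕜}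
    (hf : f ∈ continuousVanishingOff 𝕜 (ball c r)) (hg : MemLp g 2 (μ.restrict K))
    (hgv : Function.Periodic g (v i)) : ∫ x, mixedDiff 𝕜 𝕜 v s f x * g x ∂μ = 0 := by
  classical
  have hball : ball c (r + ∑ j ∈ s.erase i, ‖v j‖) ⊆ K := by
    refine (ball_subset_ball ?_).trans hK
    gcongr
    exact s.erase_subset i
  rw [← fwdDiff_mixedDiff_erase v hi]
  exact integral_fwdDiff_mul_eq_zero hgv <| integrable_mul_of_memLp_restrict
    (mixedDiff_mem_continuousVanishingOff (s.erase i) hf) hball hg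

theorem not_finiteDimensional_orthogonal_of_periodic [NormedSpace ℝ E] [Nontrivial E]
    [IsFiniteMeasureOnCompacts μ] [μ.IsOpenPosMeasure] [μ.IsAddRightInvariant]
    (hv : ∀ i ∈ s, v i ≠ 0) (hr : 0 < r) (hK : ball c (r + ∑ i ∈ s, ‖v i‖) ⊆ K)
    {S : Set (Lp 𝕜 2 (μ.restrict K))}
    (hS : ∀ F ∈ S, ∃ i ∈ s, ∃ g : E → 𝕜, F =ᵐ[μ.restrict K] g ∧ Function.Periodic g (v i)) :
    ¬ FiniteDimensional 𝕜 (Submodule.span 𝕜 S)ᗮ := by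
  intro hfin
  let D := (mixedDiff 𝕜 𝕜 v s).restrict (p := continuousVanishingOff 𝕜 (ball c r))
    fun f hf => mixedDiff_mem_continuousVanishingOff s hf
  let T := continuousVanishingOffToLp 𝕜 c _ 2 (μ.restrict K) ∘ₗ D
  have hT : Function.Injective T := by
    refine (continuousVanishingOffToLp_injective hK 2).comp ?_
    refine (injective_iff_map_eq_zero D).mpr fun f hf => Subtype.ext ?_
    exact eq_zero_of_mixedDiff_eq_zero hv f.2 (congrArg Subtype.val hf)
  have hT_orth : ∀ f, T f ∈ (Submodule.span 𝕜 S)ᗮ := by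
    intro f
    rw [← Submodule.span_singleton_le_iff_mem, ← Submodule.isOrtho_iff_le,
      Submodule.isOrtho_comm, Submodule.isOrtho_span]
    rintro F hF _ rfl
    obtain ⟨i, hi, g, hFg, hgv⟩ := hS F hF
    have hg : MemLp g 2 (μ.restrict K) := (memLp_congr_ae hFg).mp (Lp.memLp F)
    exact (inner_continuousVanishingOffToLp hK hFg (D f)).trans
      (integral_mixedDiff_mul_eq_zero hi hK f.2 hg.star fun x => congrArg star (hgv x))
  exact not_finiteDimensional_continuousVanishingOff_ball c hr
    (.of_injective (T.codRestrict _ hT_orth) (hT.codRestrict hT_orth))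

end Lp

lemma finiteDimensional_orthogonal_closure_span_of_subset {𝕜 H : Type*} [RCLike 𝕜]
    [NormedAddCommGroup H] [InnerProductSpace 𝕜 H] {S T : Set H} (hST : S ⊆ T)
    (_ : FiniteDimensional 𝕜 (Submodule.span 𝕜 S).topologicalClosureᗮ) :
    FiniteDimensional 𝕜 (Submodule.span 𝕜 T).topologicalClosureᗮ :=
  Submodule.finiteDimensional_of_le <|
    Submodule.orthogonal_le <| Submodule.topologicalClosure_mono <| Submodule.span_mono hST

lemma exists_mem_norm_eq_of_ne_bot {E : Type*} [NormedAddCommGroup E] [NormedSpace ℝ E]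
    {p : Submodule ℝ E} (hp : p ≠ ⊥) {r : ℝ} (hr : 0 ≤ r) : ∃ v ∈ p, ‖v‖ = r := by
  have : Nontrivial p := Submodule.nontrivial_iff_ne_bot.mpr hp
  obtain ⟨v, hv⟩ := exists_norm_eq p hr
  exact ⟨v, v.2, hv⟩

theorem stmt13_general (𝕜 : Type*) [RCLike 𝕜] {E : Type*} [NormedAddCommGroup E]
    [NormedSpace ℝ E] [FiniteDimensional ℝ E] [Nontrivial E] [MeasurableSpace E] [BorelSpace E]
    (μ : Measure E) [μ.IsAddHaarMeasure] {K : Set E} (hK : (interior K).Nonempty)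
    {ι : Type*} [Finite ι] {F : ι → Type*} [∀ i, AddCommGroup (F i)] [∀ i, Module ℝ (F i)]
    (ℓ : ∀ i, E →ₗ[ℝ] F i) (hℓ : ∀ i, LinearMap.ker (ℓ i) ≠ ⊥) :
    ¬ FiniteDimensional 𝕜
      (Submodule.span 𝕜 {f : Lp 𝕜 2 (μ.restrict K) | ∃ i, ∃ φ : F i → 𝕜,
        f =ᵐ[μ.restrict K] fun x => φ (ℓ i x)}).topologicalClosureᗮ := by
  have := FiniteDimensional.proper_real E
  have := Fintype.ofFinite ι
  obtain ⟨c, hc⟩ := hK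
  obtain ⟨R, hR, hball⟩ := Metric.mem_nhds_iff.mp (mem_interior_iff_mem_nhds.mp hc)
  -- A ball of radius `r`, enlarged by `r` for each ridge direction, still fits into `ball c R`.
  let r := R / (Fintype.card ι + 1)
  have hr : 0 < r := by positivity
  choose v hv hvr using fun i => exists_mem_norm_eq_of_ne_bot (hℓ i) hr.le
  have hv0 : ∀ i, v i ≠ 0 := fun i => norm_pos_iff.mp (hr.trans_eq (hvr i).symm)
  have hsum : r + ∑ i, ‖v i‖ = R := by
    simp only [hvr, Finset.sum_const, Finset.card_univ, nsmul_eq_mul, r]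
    field_simp
    ring
  rw [Submodule.orthogonal_closure]
  refine not_finiteDimensional_orthogonal_of_periodic (fun i _ => hv0 i) hr (hsum ▸ hball) ?_
  rintro f ⟨i, φ, hf⟩
  refine ⟨i, Finset.mem_univ i, _, hf, fun x => ?_⟩
  rw [map_add, LinearMap.mem_ker.mp (hv i), add_zero]

/-- for a finite `W ⊂ ℝ^m \ {0}` (`m ≥ 2`), the orthogonal complement in
`L²(J^m)` of the closed span `ℋ_W` of the ridge functions `x ↦ φ(w·x)` (`φ` bounded
continuous, `w ∈ W`) is infinite-dimensional. -/
theorem stmt13 {m : ℕ} (hm : 2 ≤ m) (W : Set (Fin m → ℝ)) (hWfin : W.Finite)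
    (hW : ∀ w ∈ W, w ≠ 0) :
    ¬ FiniteDimensional ℂ
      ↥(((Submodule.span ℂ
          {F : Lp ℂ 2 (cubeMeasure m) | ∃ w ∈ W, ∃ φ : BoundedContinuousFunction ℝ ℂ,
            ⇑F =ᵐ[cubeMeasure m] fun x => φ (∑ i, w i * x i)}).topologicalClosure)ᗮ) := by
  have := Fin.nontrivial_iff_two_le.mpr hm
  have := hWfin.to_subtype
  have hcube : (interior (Icc (-1 : Fin m → ℝ) 1)).Nonempty :=
    ⟨0, mem_interior_iff_mem_nhds.mpr (pi_Icc_mem_nhds (by simp) (by simp))⟩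
  refine fun hfin => stmt13_general ℂ volume hcube (fun w : W => dotProductBilin ℝ ℝ w.1)
    (fun w => LinearMap.ker_ne_bot_of_finrank_lt (by simpa))
    (finiteDimensional_orthogonal_closure_span_of_subset ?_ hfin)
  exact fun F ⟨w, hw, φ, hF⟩ => ⟨⟨w, hw⟩, φ, hF⟩
end

section
/- Let m ≥ 1 and let w, w' ∈ ℤ^m \ {0} be inequivalent, meaning k w ≠ l w' for all nonzero integers k, l. Let φ, ψ : ℝ → ℂ be continuous and 2-periodic (φ(s+2) = φ(s), ψ(s+2) = ψ(s) for all s) with mean zero: ∫_{−1}^{1} φ(s) ds = 0 and ∫_{−1}^{1} ψ(s) ds = 0. Then the functions x ↦ φ(w·x) and x ↦ ψ(w'·x) are orthogonal in L²(J^m): ∫_{J^m} φ(w·x) conj(ψ(w'·x)) d^m x = 0. -/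
open MeasureTheory

/-!
Linearly independent integer vectors `w₁, …, w_r ∈ ℤ^m` define a homomorphism
`x ↦ (w₁·x, …, w_r·x)` of tori `𝕋^m → 𝕋^r`, which is surjective because it lifts to a surjective
linear map `ℝ^m → ℝ^r`. A continuous surjective homomorphism of compact groups preserves normalized
Haar measure, so the coordinates `w_k·x` are independent and uniformly distributed on `𝕋`. Hence the
mean over a period box of `∏ φ_k(w_k·x)` is the product of the means of the `φ_k`.
-/

theorem linearIndependent_pair_of_forall_zsmul_ne {M : Type*} [AddCommGroup M]
    [IsAddTorsionFree M] {v v' : M} (hv : v ≠ 0) (hv' : v' ≠ 0)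
    (h : ∀ k l : ℤ, k ≠ 0 → l ≠ 0 → k • v ≠ l • v') : LinearIndependent ℤ ![v, v'] := by
  refine LinearIndependent.pair_iff.2 fun k l hkl ↦ ?_
  rcases eq_or_ne k 0 with rfl | hk
  · simpa [hv'] using hkl
  rcases eq_or_ne l 0 with rfl | hl
  · simpa [hv] using hkl
  · exact absurd (by rwa [neg_smul, ← add_eq_zero_iff_eq_neg]) (h k (-l) hk (neg_ne_zero.2 hl))

theorem mulVec_surjective_of_linearIndependent_row {ι κ K : Type*} [Fintype ι] [Finite κ] [Field K]
    {M : Matrix κ ι K} (hM : LinearIndependent K M.row) : Function.Surjective M.mulVec := by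
  have := Fintype.ofFinite κ
  have range_eq_top : M.mulVecLin.range = ⊤ := Submodule.eq_top_of_finrank_eq <| by
    rw [← Matrix.rank, hM.rank_matrix, Module.finrank_fintype_fun_eq_card]
  exact LinearMap.range_eq_top.1 range_eq_top

theorem aestronglyMeasurable_pi_prod {κ : Type*} [Fintype κ] {α : κ → Type*}
    [∀ k, MeasurableSpace (α k)] {μ : ∀ k, Measure (α k)} [∀ k, SigmaFinite (μ k)]
    {R : Type*} [TopologicalSpace R] [CommMonoid R] [ContinuousMul R] {f : ∀ k, α k → R}
    (hf : ∀ k, AEStronglyMeasurable (f k) (μ k)) :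
    AEStronglyMeasurable (fun x ↦ ∏ k, f k (x k)) (Measure.pi μ) :=
  Finset.aestronglyMeasurable_fun_prod _ fun k _ ↦
    (hf k).comp_quasiMeasurePreserving (Measure.quasiMeasurePreserving_eval μ k)

/-- The homomorphism `A^ι → A^κ`, `x ↦ (∑ i, W k i • x i)_k`, by which an integer matrix `W` acts on
the powers of an abelian group `A`. For `A = ℝ/Tℤ` it is the toral homomorphism with matrix `W`. -/
def intMatrixHom {ι κ : Type*} [Fintype ι] (A : Type*) [AddCommGroup A] (W : κ → ι → ℤ) :
    (ι → A) →+ (κ → A) where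
  toFun x k := ∑ i, W k i • x i
  map_zero' := by ext; simp
  map_add' x y := by ext; simp [Finset.sum_add_distrib]

namespace intMatrixHom

variable {ι κ : Type*} [Fintype ι]

theorem apply_comp {A B : Type*} [AddCommGroup A] [AddCommGroup B] (W : κ → ι → ℤ) (f : A →+ B)
    (x : ι → A) : intMatrixHom B W (f ∘ x) = f ∘ intMatrixHom A W x := by
  ext k
  simp [intMatrixHom]

protected theorem continuous {A : Type*} [AddCommGroup A] [TopologicalSpace A]
    [IsTopologicalAddGroup A] (W : κ → ι → ℤ) : Continuous (intMatrixHom A W) :=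
  continuous_pi fun k ↦ continuous_finsetSum _ fun i _ ↦ (continuous_apply i).zsmul (W k i)

theorem real_apply (W : κ → ι → ℤ) (x : ι → ℝ) (k : κ) :
    intMatrixHom ℝ W x k = ∑ i, (W k i : ℝ) * x i := by
  simp [intMatrixHom]

theorem surjective_real [Finite κ] {W : κ → ι → ℤ} (hW : LinearIndependent ℤ W) :
    Function.Surjective (intMatrixHom ℝ W) := by
  have hW' : LinearIndependent ℝ (fun k ↦ algebraMap ℤ ℝ ∘ W k) :=
    linearIndependent_algebraMap_comp_iff.2 hW
  have hom_eq_mulVec : intMatrixHom ℝ W = (Matrix.of fun k ↦ algebraMap ℤ ℝ ∘ W k).mulVec :=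
    funext₂ (real_apply W)
  rw [hom_eq_mulVec]
  exact mulVec_surjective_of_linearIndependent_row hW'

theorem surjective_addCircle [Finite κ] {W : κ → ι → ℤ} (hW : LinearIndependent ℤ W) (T : ℝ) :
    Function.Surjective (intMatrixHom (AddCircle T) W) := by
  have mk_surjective : Function.Surjective (QuotientAddGroup.mk' (AddSubgroup.zmultiples T)) :=
    QuotientAddGroup.mk'_surjective _
  intro y
  obtain ⟨y, rfl⟩ := mk_surjective.comp_left y
  obtain ⟨x, rfl⟩ := surjective_real hW y
  exact ⟨_, apply_comp W _ x⟩

end intMatrixHom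

section AddCircle

open AddCircle

variable {T : ℝ}

theorem periodic_lift_intMatrixHom_coe {ι κ E : Type*} [Fintype ι] {φ : ℝ → E} (hφ : φ.Periodic T)
    (W : κ → ι → ℤ) (x : ι → ℝ) (k : κ) :
    hφ.lift (intMatrixHom (AddCircle T) W (fun i ↦ x i) k) = φ (∑ i, W k i * x i) := by
  have hcoe := intMatrixHom.apply_comp W (QuotientAddGroup.mk' (AddSubgroup.zmultiples T)) x
  rw [← intMatrixHom.real_apply, ← hφ.lift_coe]
  exact congrArg hφ.lift (congrFun hcoe k)

variable [Fact (0 < T)]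

theorem aestronglyMeasurable_periodic_lift {E : Type*} [TopologicalSpace E] {φ : ℝ → E}
    (hφ : φ.Periodic T) {c : ℝ}
    (hφm : AEStronglyMeasurable φ (volume.restrict (Set.Ioc c (c + T)))) :
    AEStronglyMeasurable hφ.lift haarAddCircle := by
  have lift_eq : hφ.lift = φ ∘ Subtype.val ∘ equivIoc T c := funext fun y ↦ by
    conv_lhs => rw [← (equivIoc T c).symm_apply_apply y]
    rfl
  have hvol : AEStronglyMeasurable hφ.lift volume := lift_eq ▸
    hφm.comp_measurePreserving
      ((measurePreserving_subtype_coe measurableSet_Ioc).comp (measurePreserving_equivIoc T))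
  have haar_ac : haarAddCircle (T := T) ≪ volume := by
    rw [volume_eq_smul_haarAddCircle]
    exact Measure.absolutelyContinuous_smul (by simpa using Fact.out)
  exact hvol.mono_ac haar_ac

theorem integral_periodic_lift {E : Type*} [NormedAddCommGroup E] [NormedSpace ℝ E] {φ : ℝ → E}
    (hφ : φ.Periodic T) (c : ℝ) :
    ∫ y, hφ.lift y ∂haarAddCircle = T⁻¹ • ∫ s in c..c + T, φ s := by
  simp_rw [AddCircle.integral_haarAddCircle, ← AddCircle.intervalIntegral_preimage T c,
    hφ.lift_coe]

end AddCircle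

section Torus

open AddCircle

variable {ι κ : Type*} [Fintype ι] [Fintype κ] {T : ℝ} [Fact (0 < T)]

theorem measurePreserving_intMatrixHom {W : κ → ι → ℤ} (hW : LinearIndependent ℤ W) :
    MeasurePreserving (intMatrixHom (AddCircle T) W)
      (Measure.pi fun _ ↦ haarAddCircle) (Measure.pi fun _ ↦ haarAddCircle) :=
  AddMonoidHom.measurePreserving (intMatrixHom.continuous W)
    (intMatrixHom.surjective_addCircle hW T) (by simp)

theorem integral_prod_comp_intMatrixHom {𝕜 : Type*} [RCLike 𝕜] {W : κ → ι → ℤ}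
    (hW : LinearIndependent ℤ W) {f : κ → AddCircle T → 𝕜}
    (hf : ∀ k, AEStronglyMeasurable (f k) haarAddCircle) :
    ∫ x, ∏ k, f k (intMatrixHom (AddCircle T) W x k) ∂(Measure.pi fun _ ↦ haarAddCircle) =
      ∏ k, ∫ y, f k y ∂haarAddCircle := by
  rw [← integral_fintype_prod_eq_prod, ← (measurePreserving_intMatrixHom hW).map_eq,
    integral_map]
  · exact (measurePreserving_intMatrixHom hW).aemeasurable
  · rw [(measurePreserving_intMatrixHom hW).map_eq]
    exact aestronglyMeasurable_pi_prod hf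

theorem volume_pi_addCircle : (volume : Measure (ι → AddCircle T)) =
    ENNReal.ofReal T ^ Fintype.card ι • Measure.pi fun _ ↦ haarAddCircle :=
  Measure.pi_eq fun s _ ↦ by
    simp only [Measure.smul_apply, Measure.pi_pi, volume_eq_smul_haarAddCircle, smul_eq_mul,
      Finset.prod_mul_distrib, Finset.prod_const, Finset.card_univ]

theorem setIntegral_Icc_comp_mk {E : Type*} [NormedAddCommGroup E] [NormedSpace ℝ E]
    {f : (ι → AddCircle T) → E}
    (hf : AEStronglyMeasurable f (Measure.pi fun _ ↦ haarAddCircle)) (a : ι → ℝ) :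
    ∫ x in Set.Icc a (a + fun _ ↦ T), f (fun i ↦ x i) =
      T ^ Fintype.card ι • ∫ y, f y ∂(Measure.pi fun _ ↦ haarAddCircle) := by
  have mk_preserving : MeasurePreserving (fun (x : ι → ℝ) i ↦ (x i : AddCircle T))
      (volume.restrict (Set.univ.pi fun i ↦ Set.Ioc (a i) (a i + T))) volume := by
    rw [volume_pi, Measure.restrict_pi_pi]
    exact measurePreserving_pi _ _ fun i ↦ AddCircle.measurePreserving_mk T (a i)
  calc
    _ = ∫ x in Set.univ.pi fun i ↦ Set.Ioc (a i) (a i + T), f (fun i ↦ x i) :=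
      setIntegral_congr_set Measure.univ_pi_Ioc_ae_eq_Icc.symm
    _ = ∫ y, f y := by
      rw [← mk_preserving.map_eq, integral_map mk_preserving.aemeasurable]
      rw [mk_preserving.map_eq, volume_pi_addCircle]
      exact hf.smul_measure _
    _ = _ := by
      rw [volume_pi_addCircle, integral_smul_measure]
      simp [Fact.out (p := 0 < T) |>.le]

end Torus

theorem stmt15_general {ι κ 𝕜 : Type*} [Fintype ι] [Fintype κ] [RCLike 𝕜] {T : ℝ} (hT : 0 < T)
    {W : κ → ι → ℤ} (hW : LinearIndependent ℤ W) {φ : κ → ℝ → 𝕜} {c : ℝ}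
    (hφ : ∀ k, (φ k).Periodic T) (hφi : ∀ k, IntervalIntegrable (φ k) volume c (c + T))
    (a : ι → ℝ) :
    ∫ x in Set.Icc a (a + fun _ ↦ T), ∏ k, φ k (∑ i, W k i * x i) =
      T ^ Fintype.card ι • ∏ k, T⁻¹ • ∫ s in c..c + T, φ k s := by
  have : Fact (0 < T) := ⟨hT⟩
  have hlift k : AEStronglyMeasurable (hφ k).lift AddCircle.haarAddCircle :=
    aestronglyMeasurable_periodic_lift (hφ k) (hφi k).aestronglyMeasurable
  have hprod : AEStronglyMeasurable
      (fun y ↦ ∏ k, (hφ k).lift (intMatrixHom (AddCircle T) W y k))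
      (Measure.pi fun _ ↦ AddCircle.haarAddCircle) :=
    (aestronglyMeasurable_pi_prod hlift).comp_measurePreserving (measurePreserving_intMatrixHom hW)
  simp_rw [← integral_periodic_lift (hφ _), ← integral_prod_comp_intMatrixHom hW hlift,
    ← setIntegral_Icc_comp_mk hprod a, periodic_lift_intMatrixHom_coe]

/-- if `w, w' ∈ ℤ^m \ {0}` are inequivalent (`kw ≠ lw'` for all nonzero
integers `k, l`) and `φ, ψ : ℝ → ℂ` are continuous, `2`-periodic, with mean zero over
`[-1,1]`, then the ridge functions `x ↦ φ(w·x)` and `x ↦ ψ(w'·x)` are orthogonal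
in `L²(J^m)`. -/
theorem stmt15 {m : ℕ} (hm : 1 ≤ m) (w w' : Fin m → ℤ) (hw : w ≠ 0) (hw' : w' ≠ 0)
    (hineq : ∀ k l : ℤ, k ≠ 0 → l ≠ 0 → k • w ≠ l • w')
    (φ ψ : ℝ → ℂ) (hφ : Continuous φ) (hψ : Continuous ψ)
    (hφp : ∀ s : ℝ, φ (s + 2) = φ s) (hψp : ∀ s : ℝ, ψ (s + 2) = ψ s)
    (hφ0 : (∫ s in (-1 : ℝ)..1, φ s) = 0) (hψ0 : (∫ s in (-1 : ℝ)..1, ψ s) = 0) :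
    ∫ x in Set.Icc (-1 : Fin m → ℝ) 1,
      φ (∑ i, (w i : ℝ) * x i) * (starRingEnd ℂ) (ψ (∑ i, (w' i : ℝ) * x i)) = 0 := by
  have h := stmt15_general two_pos (linearIndependent_pair_of_forall_zsmul_ne hw hw' hineq)
    (φ := ![φ, starRingEnd ℂ ∘ ψ]) (c := -1)
    (Fin.forall_fin_two.2 ⟨hφp, Function.Periodic.comp hψp (starRingEnd ℂ)⟩)
    (Fin.forall_fin_two.2 ⟨hφ.intervalIntegrable _ _,
      (Complex.continuous_conj.comp hψ).intervalIntegrable _ _⟩) (-1)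
  have hbox : (-1 + fun _ ↦ 2 : Fin m → ℝ) = 1 := by ext; norm_num
  simpa [hbox, show (-1 : ℝ) + 2 = 1 by norm_num, hφ0] using h
end

section
/- Let m ≥ 1 and let W ⊆ ℤ^m \ {0} be a complete set of directions, meaning ⋃_{w ∈ W} ℤw = ℤ^m (every lattice point is an integer multiple of some w ∈ W). For each w ∈ W let ℋ(w) be the closed linear span in L²(J^m) of the functions x ↦ φ(w·x) with φ : ℝ → ℂ continuous and 2-periodic. Then the closed linear span of ⋃_{w ∈ W} ℋ(w) is all of L²(J^m): every F ∈ L²(J^m) is an L²-limit of finite sums of functions of the form x ↦ φ(w·x) with w ∈ W and φ continuous 2-periodic. -/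
open MeasureTheory

/-!
Halving coordinates and reducing modulo `1` identifies the cube, up to a null set, with the torus,
so every `L^p` function on the cube is the pullback of one on the torus. There the trigonometric
polynomials are uniformly dense in the continuous functions, which are dense in `L^p`. By
completeness of `W` each frequency is `k • w` with `w ∈ W`, and the character of frequency `k • w`
pulls back to the ridge function `x ↦ exp (π i k (w ⬝ x))`.
-/

open scoped ENNReal

section Pullback

variable {α β E : Type*} [MeasurableSpace α] [MeasurableSpace β] [NormedAddCommGroup E]
  {μ : Measure α} {ν : Measure β} {p : ℝ≥0∞} {f : α → β}

lemma compMeasurePreserving_surjective_of_ae_leftInverse {g : β → α}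
    (hf : MeasurePreserving f μ ν) (hg : Measurable g) (hgf : g ∘ f =ᵐ[μ] id) :
    Function.Surjective (Lp.compMeasurePreserving (E := E) (p := p) f hf) := by
  have hgν : MeasurePreserving g ν μ :=
    ⟨hg, by rw [← hf.map_eq, Measure.map_map hg hf.measurable, Measure.map_congr hgf,
      Measure.map_id]⟩
  refine fun F => ⟨Lp.compMeasurePreserving g hgν F, Lp.ext ?_⟩
  calc Lp.compMeasurePreserving f hf (Lp.compMeasurePreserving g hgν F)
      =ᵐ[μ] Lp.compMeasurePreserving g hgν F ∘ f := Lp.coeFn_compMeasurePreserving _ hf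
    _ =ᵐ[μ] F ∘ g ∘ f :=
      hf.quasiMeasurePreserving.ae_eq_comp (Lp.coeFn_compMeasurePreserving F hgν)
    _ =ᵐ[μ] F := hgf.fun_comp F

variable [TopologicalSpace β] [CompactSpace β] [BorelSpace β] [SecondCountableTopologyEither β E]
  [IsFiniteMeasure ν] [Fact (1 ≤ p)] {𝕜 : Type*} [NormedField 𝕜] [NormedSpace 𝕜 E]

variable (p 𝕜) in
/-- The pullback `h ↦ h ∘ f` of continuous functions along a measure-preserving map `f` into a
compact space, as a continuous linear map with values in `L^p`. -/
noncomputable def continuousMapPullbackLp (hf : MeasurePreserving f μ ν) :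
    C(β, E) →L[𝕜] Lp E p μ :=
  (Lp.compMeasurePreservingₗᵢ 𝕜 f hf).toContinuousLinearMap ∘L ContinuousMap.toLp p ν 𝕜

lemma coeFn_continuousMapPullbackLp (hf : MeasurePreserving f μ ν) (h : C(β, E)) :
    continuousMapPullbackLp p 𝕜 hf h =ᵐ[μ] h ∘ f :=
  (Lp.coeFn_compMeasurePreserving _ hf).trans
    (hf.quasiMeasurePreserving.ae_eq_comp (ContinuousMap.coeFn_toLp ν h))

lemma denseRange_continuousMapPullbackLp [NormalSpace β] [ν.WeaklyRegular] [NormedSpace ℝ E]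
    (hp : p ≠ ∞) {g : β → α} (hf : MeasurePreserving f μ ν) (hg : Measurable g)
    (hgf : g ∘ f =ᵐ[μ] id) :
    DenseRange (continuousMapPullbackLp p 𝕜 hf : C(β, E) →L[𝕜] Lp E p μ) :=
  (compMeasurePreserving_surjective_of_ae_leftInverse hf hg hgf).denseRange.comp
    (ContinuousMap.toLp_denseRange E ν 𝕜 hp)
    (Lp.compMeasurePreservingₗᵢ 𝕜 f hf).continuous

end Pullback

lemma fourier_sum {ι : Type*} {T : ℝ} (k : ℤ) (s : Finset ι) (t : ι → AddCircle T) :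
    fourier k (∑ i ∈ s, t i) = ∏ i ∈ s, fourier k (t i) := by
  induction s using Finset.cons_induction with
  | empty => rw [Finset.sum_empty, Finset.prod_empty, fourier_eval_zero]
  | cons i s hi ih =>
    rw [Finset.sum_cons, Finset.prod_cons, ← ih]
    simp only [fourier_apply, smul_add, AddCircle.toCircle_add, Circle.coe_mul]

section Torus

variable {ι : Type*}

/-- The quotient map of `ℝ^ι` onto the torus `ℝ^ι / 2ℤ^ι`, which is realised as the unit torus by
halving coordinates. -/
noncomputable def torusProj (x : ι → ℝ) : UnitAddTorus ι :=
  fun i => ((x i / 2 : ℝ) : UnitAddCircle)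

/-- The representative of a point of the unit torus in the half-open cube `(-1,1]^ι`, a section of
`torusProj`. -/
noncomputable def torusLift (t : UnitAddTorus ι) : ι → ℝ :=
  fun i => 2 * (AddCircle.equivIoc 1 (-1 / 2) (t i) : ℝ)

lemma measurable_torusProj : Measurable (torusProj : (ι → ℝ) → UnitAddTorus ι) :=
  measurable_pi_lambda _ fun i =>
    AddCircle.measurable_mk'.comp ((measurable_pi_apply i).div_const 2)

lemma measurable_torusLift : Measurable (torusLift : UnitAddTorus ι → ι → ℝ) :=
  measurable_pi_lambda _ fun i => (measurable_subtype_coe.comp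
    ((AddCircle.measurableEquivIoc 1 (-1 / 2)).measurable.comp (measurable_pi_apply i))).const_mul 2

lemma torusLift_torusProj {x : ι → ℝ} (hx : ∀ i, x i ∈ Set.Ioc (-1 : ℝ) 1) :
    torusLift (torusProj x) = x := by
  funext i
  have hmem : x i / 2 ∈ Set.Ioc (-1 / 2 : ℝ) (-1 / 2 + 1) := by
    constructor <;> linarith [(hx i).1, (hx i).2]
  rw [torusLift, torusProj, AddCircle.equivIoc_coe_of_mem hmem]
  ring

variable [Fintype ι]

lemma sum_zsmul_torusProj (w : ι → ℤ) (x : ι → ℝ) :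
    ∑ i, w i • torusProj x i = (((∑ i, (w i : ℝ) * x i) / 2 : ℝ) : UnitAddCircle) := by
  simp only [torusProj, ← AddCircle.coe_zsmul, ← QuotientAddGroup.mk_sum, zsmul_eq_mul,
    Finset.sum_div, mul_div_assoc]

lemma mFourier_zsmul_apply (k : ℤ) (w : ι → ℤ) (t : UnitAddTorus ι) :
    UnitAddTorus.mFourier (k • w) t = fourier k (∑ i, w i • t i) := by
  rw [fourier_sum]
  simp only [UnitAddTorus.mFourier, ContinuousMap.coe_mk, fourier_apply, Pi.smul_apply, smul_assoc]

lemma mFourier_zsmul_torusProj (k : ℤ) (w : ι → ℤ) (x : ι → ℝ) :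
    UnitAddTorus.mFourier (k • w) (torusProj x) =
      fourier k (((∑ i, (w i : ℝ) * x i) / 2 : ℝ) : UnitAddCircle) := by
  rw [mFourier_zsmul_apply, sum_zsmul_torusProj]

end Torus

lemma continuous_fourier_half (k : ℤ) :
    Continuous fun s : ℝ => fourier k ((s / 2 : ℝ) : UnitAddCircle) :=
  (fourier k).continuous.comp ((AddCircle.continuous_mk' 1).comp (continuous_id.div_const 2))

lemma periodic_fourier_half (k : ℤ) :
    Function.Periodic (fun s : ℝ => fourier k ((s / 2 : ℝ) : UnitAddCircle)) 2 := fun s => by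
  simp only [add_div, div_self (two_ne_zero' ℝ), AddCircle.coe_add_period]

instance isFiniteMeasure_cubeMeasure (m : ℕ) : IsFiniteMeasure (cubeMeasure m) :=
  isFiniteMeasure_restrict.2 isCompact_Icc.measure_lt_top.ne

lemma ae_cubeMeasure_mem_Ioc (m : ℕ) :
    ∀ᵐ x ∂cubeMeasure m, ∀ i, x i ∈ Set.Ioc (-1 : ℝ) 1 := by
  have hcube : Set.univ.pi (fun i : Fin m => Set.Ioc (-1 : ℝ) 1) =ᵐ[volume] Set.Icc (-1) 1 :=
    Measure.univ_pi_Ioc_ae_eq_Icc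
  rw [cubeMeasure, ← Measure.restrict_congr_set hcube]
  filter_upwards [ae_restrict_mem (MeasurableSet.univ_pi fun _ => measurableSet_Ioc)] with x hx i
  exact hx i trivial

theorem stmt19_general {ι : Type*} [Fintype ι] {μ : Measure (ι → ℝ)} [IsFiniteMeasure μ]
    (hμ : ∀ᵐ x ∂μ, ∀ i, x i ∈ Set.Ioc (-1 : ℝ) 1) {p : ℝ≥0∞} [Fact (1 ≤ p)] (hp : p ≠ ∞)
    (W : Set (ι → ℤ)) (hcomplete : ∀ v : ι → ℤ, ∃ w ∈ W, ∃ k : ℤ, v = k • w) :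
    (Submodule.span ℂ
      {F : Lp ℂ p μ | ∃ w ∈ W, ∃ φ : ℝ → ℂ, Continuous φ ∧
        (∀ s : ℝ, φ (s + 2) = φ s) ∧
        ⇑F =ᵐ[μ] fun x => φ (∑ i, (w i : ℝ) * x i)}).topologicalClosure
      = ⊤ := by
  have hproj : MeasurePreserving torusProj μ (μ.map torusProj) :=
    measurable_torusProj.measurePreserving μ
  have hlift : torusLift ∘ torusProj =ᵐ[μ] id := hμ.mono fun x hx => torusLift_torusProj hx
  have hdense := (denseRange_continuousMapPullbackLp (𝕜 := ℂ) (E := ℂ) hp hproj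
    measurable_torusLift hlift).topologicalClosure_map_submodule
      UnitAddTorus.span_mFourier_closure_eq_top
  rw [Submodule.map_span] at hdense
  refine eq_top_mono (Submodule.topologicalClosure_mono (Submodule.span_mono ?_)) hdense
  rintro _ ⟨_, ⟨v, rfl⟩, rfl⟩
  obtain ⟨w, hw, k, rfl⟩ := hcomplete v
  exact ⟨w, hw, _, continuous_fourier_half k, periodic_fourier_half k,
    (coeFn_continuousMapPullbackLp hproj _).trans (.of_forall (mFourier_zsmul_torusProj k w))⟩

/-- if `W ⊆ ℤ^m \ {0}` is complete (every lattice point of `ℤ^m` is an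
integer multiple of some `w ∈ W`), then the closed linear span in `L²(J^m)` of all ridge
functions `x ↦ φ(w·x)` with `w ∈ W` and `φ : ℝ → ℂ` continuous `2`-periodic is all of
`L²(J^m)`. -/
theorem stmt19 {m : ℕ} (hm : 1 ≤ m) (W : Set (Fin m → ℤ)) (hW : ∀ w ∈ W, w ≠ 0)
    (hcomplete : ∀ v : Fin m → ℤ, ∃ w ∈ W, ∃ k : ℤ, v = k • w) :
    (Submodule.span ℂ
      {F : Lp ℂ 2 (cubeMeasure m) | ∃ w ∈ W, ∃ φ : ℝ → ℂ, Continuous φ ∧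
        (∀ s : ℝ, φ (s + 2) = φ s) ∧
        ⇑F =ᵐ[cubeMeasure m] fun x => φ (∑ i, (w i : ℝ) * x i)}).topologicalClosure
      = ⊤ :=
  stmt19_general (ae_cubeMeasure_mem_Ioc m) ENNReal.ofNat_ne_top W hcomplete
end
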